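/- arXiv:1511.03810 — 2 statements merged into one kernel-verified Lean document; each statement's English description precedes it below -/
import Mathlib

section
/- Let n = p1⋯pk be an odd positive squarefree integer with distinct prime factors, let d1 and d2 be positive divisors of n, and let d3 be the squarefree part of d1·d2. Then the system H1: −n·t² + d2·u2² − d3·u3² = 0, H2: −n·t² + d3·u3² − d1·u1² = 0, H3: 2n·t² + d1·u1² − d2·u2² = 0 has a nonzero solution over ℝ and over ℚ_p for every prime p if and only if M_n·x = 0 in F_2^{2k}, where x = (v_{p1}(d1), …, v_{pk}(d1), v_{p1}(d2), …, v_{pk}(d2))^T and v_p denotes the p-adic valuation. -/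
open Classical in
/-- The additive Legendre symbol `[a/p] ∈ F₂`: `0` if `a` is a square mod `p`, `1` otherwise. -/
noncomputable def aLeg (a : ℤ) (p : ℕ) : ZMod 2 :=
  if IsSquare ((a : ZMod p)) then 0 else 1

/-- The matrix `A` of the Monsky matrix: `a_{ij} = [p_j/p_i]` for `i ≠ j` and
`a_{ii} = Σ_{l ≠ i} [p_l/p_i]`. -/
noncomputable def monskyA (k : ℕ) (p : Fin k → ℕ) : Matrix (Fin k) (Fin k) (ZMod 2) :=
  Matrix.of fun i j =>
    if i = j then ∑ l ∈ Finset.univ.filter (· ≠ i), aLeg (p l) (p i) else aLeg (p j) (p i)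

/-- The diagonal matrix `D_u = diag([u/p₁], …, [u/p_k])`. -/
noncomputable def monskyD (k : ℕ) (p : Fin k → ℕ) (u : ℤ) : Matrix (Fin k) (Fin k) (ZMod 2) :=
  Matrix.diagonal fun i => aLeg u (p i)

/-- The Monsky matrix `M_n = [[A + D₋₂, D₂], [D₂, A + D₂]]`. -/
noncomputable def monskyM (k : ℕ) (p : Fin k → ℕ) :
    Matrix (Fin k ⊕ Fin k) (Fin k ⊕ Fin k) (ZMod 2) :=
  Matrix.fromBlocks (monskyA k p + monskyD k p (-2)) (monskyD k p 2)
    (monskyD k p 2) (monskyA k p + monskyD k p 2)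

/-- Square roots of units in `ℚ_q`, `q` odd. -/
lemma isSquare_padic_odd (q : ℕ) [Fact q.Prime] (hq : q ≠ 2) (m : ℤ)
    (hm : (m : ZMod q) ≠ 0) (hs : IsSquare (m : ZMod q)) : ∃ u : ℚ_[q], u ^ 2 = m := by
  obtain ⟨r, hr⟩ := hs
  obtain ⟨x, rfl⟩ := ZMod.intCast_surjective r
  have hx : ¬ (q : ℤ) ∣ x := by
    intro h
    rw [← ZMod.intCast_zmod_eq_zero_iff_dvd] at h
    simp [h] at hr
    exact hm hr
  have h2 : ¬ (q : ℤ) ∣ 2 * x := by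
    intro h
    rcases (Nat.prime_iff_prime_int.mp (Fact.out : q.Prime)).dvd_or_dvd h with h | h
    · have : q ∣ 2 := by exact_mod_cast h
      exact hq ((Nat.prime_dvd_prime_iff_eq Fact.out Nat.prime_two).mp this)
    · exact hx h
  have hd : (q : ℤ) ∣ x * x - m := by
    rw [← ZMod.intCast_zmod_eq_zero_iff_dvd]
    push_cast
    rw [hr]; ring
  have := hensels_lemma (p := q) (F := (Polynomial.X ^ 2 - Polynomial.C (m : ℤ_[q])))
    (a := (x : ℤ_[q])) (by
      have e1 : ‖((x * x - m : ℤ) : ℤ_[q])‖ < 1 := (PadicInt.norm_int_lt_one_iff_dvd _).mpr hd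
      have e2 : ‖((2 * x : ℤ) : ℤ_[q])‖ = 1 := by
        have h3 := mt (PadicInt.norm_int_lt_one_iff_dvd (p := q) (2 * x)).mp h2
        exact le_antisymm (PadicInt.norm_le_one _) (not_lt.mp h3)
      push_cast at e1 e2
      simp only [map_sub, map_pow, Polynomial.aeval_X, Polynomial.derivative_sub, Polynomial.derivative_X_pow, Polynomial.derivative_C, Polynomial.aeval_C, Polynomial.aeval_mul, sub_zero]
      simp [one_add_one_eq_two, ← norm_mul, pow_two] at e1 ⊢
      rw [norm_mul (2 * (x : ℤ_[q])), e2]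
      simpa using e1)
  obtain ⟨z, hz, -⟩ := this
  refine ⟨(z : ℚ_[q]), ?_⟩
  simp [sub_eq_zero] at hz
  exact_mod_cast congrArg (fun w : ℤ_[q] => (w : ℚ_[q])) hz

lemma isSquare_padic_two (m : ℤ) (hm : m % 8 = 1) : ∃ u : ℚ_[2], u ^ 2 = m := by
  have hd : ((2 ^ 3 : ℕ) : ℤ) ∣ 1 - m := by norm_num; omega
  have := hensels_lemma (p := 2) (F := (Polynomial.X ^ 2 - Polynomial.C (m : ℤ_[2])))
    (a := (1 : ℤ_[2])) (by
      have e1 := (PadicInt.norm_int_le_pow_iff_dvd (p := 2) (k := 1 - m) (n := 3)).mpr (by exact_mod_cast hd)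
      have e2 : ‖(2 : ℤ_[2])‖ = 2⁻¹ := by
        simpa using PadicInt.norm_p (p := 2)
      push_cast at e1
      simp [one_add_one_eq_two]
      rw [e2]
      refine lt_of_le_of_lt e1 ?_
      norm_num)
  obtain ⟨z, hz, -⟩ := this
  refine ⟨(z : ℚ_[2]), ?_⟩
  simp [sub_eq_zero] at hz
  exact_mod_cast congrArg (fun w : ℤ_[2] => (w : ℚ_[2])) hz

/-- The system, after dividing the three conics by `c`, `b`, `e`. -/
def LSol (K : Type) [Field K] (a b c e : ℕ) : Prop :=
  ∃ t u₁ u₂ u₃ : K, ¬(t = 0 ∧ u₁ = 0 ∧ u₂ = 0 ∧ u₃ = 0) ∧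
    (e : K) * u₂ ^ 2 - b * u₃ ^ 2 = a * b * e * t ^ 2 ∧
    (c : K) * u₃ ^ 2 - e * u₁ ^ 2 = a * c * e * t ^ 2 ∧
    (c : K) * u₂ ^ 2 - b * u₁ ^ 2 = 2 * a * b * c * t ^ 2

lemma LSol_iff (K : Type) [Field K] [CharZero K] (a b c e : ℕ) (hb : b ≠ 0)
    (hc : c ≠ 0) (he : e ≠ 0) :
    (∃ t u₁ u₂ u₃ : K, ¬(t = 0 ∧ u₁ = 0 ∧ u₂ = 0 ∧ u₃ = 0) ∧
        -((a * b * c * e : ℕ) : K) * t ^ 2 + ((c * e : ℕ) : K) * u₂ ^ 2 - ((b * c : ℕ) : K) * u₃ ^ 2 = 0 ∧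
        -((a * b * c * e : ℕ) : K) * t ^ 2 + ((b * c : ℕ) : K) * u₃ ^ 2 - ((b * e : ℕ) : K) * u₁ ^ 2 = 0 ∧
        2 * ((a * b * c * e : ℕ) : K) * t ^ 2 + ((b * e : ℕ) : K) * u₁ ^ 2 - ((c * e : ℕ) : K) * u₂ ^ 2 = 0) ↔
    LSol K a b c e := by
  have hb' : (b : K) ≠ 0 := by exact_mod_cast hb
  have hc' : (c : K) ≠ 0 := by exact_mod_cast hc
  have he' : (e : K) ≠ 0 := by exact_mod_cast he
  unfold LSol
  push_cast
  constructor
  · rintro ⟨t, u₁, u₂, u₃, h, h1, h2, h3⟩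
    refine ⟨t, u₁, u₂, u₃, h, ?_, ?_, ?_⟩
    · apply mul_left_cancel₀ hc'; linear_combination h1
    · apply mul_left_cancel₀ hb'; linear_combination h2
    · apply mul_left_cancel₀ he'; linear_combination -h3
  · rintro ⟨t, u₁, u₂, u₃, h, h1, h2, h3⟩
    refine ⟨t, u₁, u₂, u₃, h, ?_, ?_, ?_⟩
    · linear_combination c * h1
    · linear_combination b * h2
    · linear_combination -e * h3

lemma LSol_real (a b c e : ℕ) (hb : b ≠ 0) (hc : c ≠ 0) (he : e ≠ 0) : LSol ℝ a b c e := by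
  have h0 : (0:ℝ) < b := by exact_mod_cast Nat.pos_of_ne_zero hb
  have h1 : (0:ℝ) < c := by exact_mod_cast Nat.pos_of_ne_zero hc
  have h2 : (0:ℝ) < e := by exact_mod_cast Nat.pos_of_ne_zero he
  refine ⟨0, √c, √b, √e, ?_, ?_, ?_, ?_⟩
  · intro h
    exact (Real.sqrt_pos.mpr h1).ne' h.2.1
  all_goals
    rw [Real.sq_sqrt, Real.sq_sqrt] <;> try positivity
    ring

/-- Sufficiency at `2`. -/
lemma LSol_two (a b c e : ℕ) (ha : a % 2 = 1) (hb : b % 2 = 1) (hc : c % 2 = 1) (he : e % 2 = 1)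
    (h : (b * e % 4 = 1 ∧ c * e % 4 = 1) ∨ (a * b % 4 = 1 ∧ a * c % 4 = 3))
    (h8 : b * c % 8 = 1 ∨ b * c % 8 = 7) : LSol ℚ_[2] a b c e := by
  have hb' : (b : ℚ_[2]) ≠ 0 := by rw [Nat.cast_ne_zero]; omega
  have hc' : (c : ℚ_[2]) ≠ 0 := by rw [Nat.cast_ne_zero]; omega
  have he' : (e : ℚ_[2]) ≠ 0 := by rw [Nat.cast_ne_zero]; omega
  have key : ∀ (t u₃ : ℤ), (t ≠ 0 ∨ u₃ ≠ 0) →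
      ((c * u₃ ^ 2 - a * c * e * t ^ 2) * e : ℤ) % 8 = 1 →
      ((b * u₃ ^ 2 + a * b * e * t ^ 2) * e : ℤ) % 8 = 1 → LSol ℚ_[2] a b c e := by
    intro t u₃ hn h1 h2
    obtain ⟨v, hv⟩ := isSquare_padic_two _ h1
    obtain ⟨w, hw⟩ := isSquare_padic_two _ h2
    push_cast at hv hw
    refine ⟨t, v / e, w / e, u₃, ?_, ?_, ?_, ?_⟩
    · rintro ⟨h3, -, -, h4⟩
      have h3' : t = 0 := by exact_mod_cast h3
      have h4' : u₃ = 0 := by exact_mod_cast h4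
      tauto
    · rw [div_pow, hw]; field_simp; ring
    · rw [div_pow, hv]; field_simp; ring
    · rw [div_pow, div_pow, hv, hw]; field_simp; ring
  have m8 : ∀ x : ℕ, x % 2 = 1 → x % 8 = 1 ∨ x % 8 = 3 ∨ x % 8 = 5 ∨ x % 8 = 7 := by
    intro x hx; omega
  have l4 : ∀ x y : ℕ, x * y % 4 = (x % 8) * (y % 8) % 4 := by
    intro x y; rw [Nat.mul_mod, ← Nat.mod_mod_of_dvd x (by norm_num : 4 ∣ 8),
      ← Nat.mod_mod_of_dvd y (by norm_num : 4 ∣ 8), ← Nat.mul_mod]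
  have cast8 : ∀ z : ℤ, z % 8 = 1 ↔ (z : ZMod 8) = 1 := by
    intro z
    have := ZMod.intCast_eq_intCast_iff' z 1 8
    simpa using this.symm
  have castn : ∀ x r : ℕ, x % 8 = r → (x : ZMod 8) = r := by
    intro x r hx
    rw [← hx]; simp
  rw [l4 b e, l4 c e, l4 a b, l4 a c] at h
  rw [Nat.mul_mod b c] at h8
  simp only [cast8] at key
  push_cast at key
  rcases m8 a ha with ha | ha | ha | ha <;> rcases m8 b hb with hb | hb | hb | hb <;>
  rcases m8 c hc with hc | hc | hc | hc <;> rcases m8 e he with he | he | he | he <;>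
  rw [ha, hb, hc, he] at h <;> rw [hb, hc] at h8 <;>
  rw [castn _ _ ha, castn _ _ hb, castn _ _ hc, castn _ _ he] at key <;>
  first
  | (exfalso; revert h; decide)
  | (exfalso; revert h8; decide)
  | exact key 0 1 (by norm_num) (by decide) (by decide)
  | exact key 1 0 (by norm_num) (by decide) (by decide)
  | exact key 2 1 (by norm_num) (by decide) (by decide)
  | exact key 1 2 (by norm_num) (by decide) (by decide)
lemma padicInt_toZMod_eq_zero_iff (q : ℕ) [Fact q.Prime] (x : ℤ_[q]) :
    PadicInt.toZMod x = 0 ↔ (q : ℤ_[q]) ∣ x := by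
  rw [← RingHom.mem_ker, PadicInt.ker_toZMod, PadicInt.maximalIdeal_eq_span_p,
    Ideal.mem_span_singleton]

/-- A solution over `ℚ_q` can be made primitive. -/
lemma LSol_primitive (q : ℕ) [Fact q.Prime] (a b c e : ℕ) (h : LSol ℚ_[q] a b c e) :
    ∃ t u₁ u₂ u₃ : ℤ_[q], ¬((q : ℤ_[q]) ∣ t ∧ (q : ℤ_[q]) ∣ u₁ ∧ (q : ℤ_[q]) ∣ u₂ ∧ (q : ℤ_[q]) ∣ u₃) ∧
    (e : ℤ_[q]) * u₂ ^ 2 - b * u₃ ^ 2 = a * b * e * t ^ 2 ∧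
    (c : ℤ_[q]) * u₃ ^ 2 - e * u₁ ^ 2 = a * c * e * t ^ 2 ∧
    (c : ℤ_[q]) * u₂ ^ 2 - b * u₁ ^ 2 = 2 * a * b * c * t ^ 2 := by
  obtain ⟨t, u₁, u₂, u₃, hn, h1, h2, h3⟩ := h
  obtain ⟨z, hz, hz1⟩ : ∃ z : ℚ_[q], (z = t ∨ z = u₁ ∨ z = u₂ ∨ z = u₃) ∧
      (‖t‖ ≤ ‖z‖ ∧ ‖u₁‖ ≤ ‖z‖ ∧ ‖u₂‖ ≤ ‖z‖ ∧ ‖u₃‖ ≤ ‖z‖) := by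
    classical
    obtain ⟨z, hz, hm⟩ := Finset.exists_max_image (insert t (insert u₁ (insert u₂ {u₃})) : Finset ℚ_[q]) (fun x => ‖x‖) (by simp)
    refine ⟨z, by simpa using hz, ?_⟩
    refine ⟨hm _ (by simp), hm _ (by simp), hm _ (by simp), hm _ (by simp)⟩
  have hz0 : z ≠ 0 := by
    rintro rfl
    simp only [norm_zero, norm_le_zero_iff] at hz1
    exact hn hz1
  have hzn : 0 < ‖z‖ := norm_pos_iff.mpr hz0
  have hle : ∀ x : ℚ_[q], ‖x‖ ≤ ‖z‖ → ‖x / z‖ ≤ 1 := by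
    intro x hx
    rw [norm_div]
    exact (div_le_one hzn).mpr hx
  have lift : ∀ x : ℚ_[q], ‖x‖ ≤ ‖z‖ → ∃ y : ℤ_[q], (y : ℚ_[q]) = x / z :=
    fun x hx => ⟨⟨x / z, hle x hx⟩, rfl⟩
  have hnd : ∀ y : ℤ_[q], (y : ℚ_[q]) = z / z → ¬ (q : ℤ_[q]) ∣ y := by
    intro y hy hd
    have hd' := (PadicInt.norm_lt_one_iff_dvd y).mpr hd
    rw [PadicInt.norm_def, hy, div_self hz0, norm_one] at hd'
    exact lt_irrefl _ hd'
  obtain ⟨t', ht⟩ := lift t hz1.1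
  obtain ⟨v₁, hv1⟩ := lift u₁ hz1.2.1
  obtain ⟨v₂, hv2⟩ := lift u₂ hz1.2.2.1
  obtain ⟨v₃, hv3⟩ := lift u₃ hz1.2.2.2
  refine ⟨t', v₁, v₂, v₃, ?_, ?_, ?_, ?_⟩
  · rintro ⟨g1, g2, g3, g4⟩
    rcases hz with rfl | rfl | rfl | rfl
    · exact hnd _ ht g1
    · exact hnd _ hv1 g2
    · exact hnd _ hv2 g3
    · exact hnd _ hv3 g4
  · apply Subtype.ext
    push_cast
    rw [ht, hv2, hv3, div_pow, div_pow, div_pow]; field_simp; linear_combination h1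
  · apply Subtype.ext
    push_cast
    rw [ht, hv1, hv3, div_pow, div_pow, div_pow]; field_simp; linear_combination h2
  · apply Subtype.ext
    have h4 : ((2 : ℤ_[q]) : ℚ_[q]) = 2 := rfl
    push_cast
    rw [h4, ht, hv1, hv2, div_pow, div_pow, div_pow]; field_simp; linear_combination h3

lemma isSquare_of_eq {F : Type} [Field F] {x y z : F} (hz : z ≠ 0) (h : y ^ 2 = x * z ^ 2) :
    IsSquare x := ⟨y / z, by field_simp; linear_combination -h⟩

section fwd
variable (q : ℕ) [Fact q.Prime] (a b c e : ℕ)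

lemma fwd_a (ha : q ∣ a) (ha2 : ¬ q ^ 2 ∣ a) (hb : ¬ q ∣ b) (hc : ¬ q ∣ c) (he : ¬ q ∣ e) 
    (h : LSol ℚ_[q] a b c e) :
    IsSquare ((b * e : ℤ) : ZMod q) ∧ IsSquare ((c * e : ℤ) : ZMod q) := by
  obtain ⟨t, u₁, u₂, u₃, hn, h1, h2, h3⟩ := LSol_primitive q a b c e h
  obtain ⟨a', rfl⟩ := ha
  have ha' : ¬ q ∣ a' := fun hd => ha2 (by rw [pow_two]; exact mul_dvd_mul_left q hd)
  rw [← ZMod.natCast_eq_zero_iff] at hb hc he ha'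
  have hq0 : (q : ℤ_[q]) ≠ 0 := by exact_mod_cast (Fact.out : q.Prime).ne_zero
  simp only [← padicInt_toZMod_eq_zero_iff] at hn
  have g1 := congrArg PadicInt.toZMod h1
  have g2 := congrArg PadicInt.toZMod h2
  simp only [map_sub, map_mul, map_pow, map_natCast, Nat.cast_mul,
    CharP.cast_eq_zero, zero_mul, sub_eq_zero] at g1 g2
  have h0 : PadicInt.toZMod u₃ ≠ 0 := by
    intro d3
    rw [d3] at g1 g2
    simp [hb, hc, he] at g1 g2
    obtain ⟨w, rfl⟩ := (padicInt_toZMod_eq_zero_iff q u₃).mp d3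
    obtain ⟨v, rfl⟩ := (padicInt_toZMod_eq_zero_iff q u₂).mp g1
    push_cast at h1
    have k1 : q * (e * v ^ 2 - b * w ^ 2) = a' * b * e * t ^ 2 := by
      apply mul_left_cancel₀ hq0; linear_combination h1
    have k2 := congrArg PadicInt.toZMod k1
    simp [ha', hb, he] at k2
    exact hn ⟨k2, g2, g1, d3⟩
  have f1 : (e * PadicInt.toZMod u₂) ^ 2 = ((b * e : ℤ) : ZMod q) * (PadicInt.toZMod u₃) ^ 2 := by
    push_cast; linear_combination e * g1
  have f2 : (e * PadicInt.toZMod u₁) ^ 2 = ((c * e : ℤ) : ZMod q) * (PadicInt.toZMod u₃) ^ 2 := by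
    push_cast; linear_combination -e * g2
  exact ⟨isSquare_of_eq h0 f1, isSquare_of_eq h0 f2⟩

lemma fwd_b (hb : q ∣ b) (hb2 : ¬ q ^ 2 ∣ b) (he : ¬ q ∣ e)
    (h : LSol ℚ_[q] a b c e) :
    IsSquare ((-(a * e) : ℤ) : ZMod q) ∧ IsSquare ((-(2 * a * c) : ℤ) : ZMod q) := by
  obtain ⟨t, u₁, u₂, u₃, hn, h1, h2, h3⟩ := LSol_primitive q a b c e h
  obtain ⟨b', rfl⟩ := hb
  have hb' : ¬ q ∣ b' := fun hd => hb2 (by rw [pow_two]; exact mul_dvd_mul_left q hd)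
  rw [← ZMod.natCast_eq_zero_iff] at hb' he
  have hq0 : (q : ℤ_[q]) ≠ 0 := by exact_mod_cast (Fact.out : q.Prime).ne_zero
  simp only [← padicInt_toZMod_eq_zero_iff] at hn
  have d2 : PadicInt.toZMod u₂ = 0 := by
    have := congrArg PadicInt.toZMod h1
    simpa [he] using this
  obtain ⟨w, rfl⟩ := (padicInt_toZMod_eq_zero_iff q u₂).mp d2
  push_cast at h1 h3
  have g1 : -u₃ ^ 2 * b' + q * e * w ^ 2 = a * b' * e * t ^ 2 := by
    apply mul_left_cancel₀ hq0; linear_combination h1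
  have g3 : c * q * w ^ 2 - b' * u₁ ^ 2 = 2 * a * b' * c * t ^ 2 := by
    apply mul_left_cancel₀ hq0; linear_combination h3
  replace g1 := congrArg PadicInt.toZMod g1
  replace g3 := congrArg PadicInt.toZMod g3
  simp only [map_add, map_sub, map_mul, map_neg, map_pow, map_natCast, map_ofNat, 
    CharP.cast_eq_zero, zero_mul, mul_zero, zero_sub, add_zero] at g1 g3
  have f1 : (PadicInt.toZMod u₃) ^ 2 = (-(a * e) : ZMod q) * (PadicInt.toZMod t) ^ 2 := by
    apply mul_left_cancel₀ hb'; linear_combination -g1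
  have f3 : (PadicInt.toZMod u₁) ^ 2 = (-(2 * a * c) : ZMod q) * (PadicInt.toZMod t) ^ 2 := by
    apply mul_left_cancel₀ hb'; linear_combination -g3
  have ht : PadicInt.toZMod t ≠ 0 := by
    intro ht
    rw [ht] at f1 f3
    simp at f1 f3
    exact hn ⟨ht, f3, d2, f1⟩
  push_cast
  exact ⟨isSquare_of_eq ht f1, isSquare_of_eq ht f3⟩

lemma fwd_c (hc : q ∣ c) (hc2 : ¬ q ^ 2 ∣ c) (he : ¬ q ∣ e)
    (h : LSol ℚ_[q] a b c e) :
    IsSquare ((a * e : ℤ) : ZMod q) ∧ IsSquare ((2 * a * b : ℤ) : ZMod q) := by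
  obtain ⟨t, u₁, u₂, u₃, hn, h1, h2, h3⟩ := LSol_primitive q a b c e h
  obtain ⟨c', rfl⟩ := hc
  have hc' : ¬ q ∣ c' := fun hd => hc2 (by rw [pow_two]; exact mul_dvd_mul_left q hd)
  rw [← ZMod.natCast_eq_zero_iff] at hc' he
  have hq0 : (q : ℤ_[q]) ≠ 0 := by exact_mod_cast (Fact.out : q.Prime).ne_zero
  simp only [← padicInt_toZMod_eq_zero_iff] at hn
  have d1 : PadicInt.toZMod u₁ = 0 := by
    have := congrArg PadicInt.toZMod h2
    simpa [he] using this
  obtain ⟨w, rfl⟩ := (padicInt_toZMod_eq_zero_iff q u₁).mp d1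
  push_cast at h2 h3
  have g2 : c' * u₃ ^ 2 - q * e * w ^ 2 = a * c' * e * t ^ 2 := by
    apply mul_left_cancel₀ hq0; linear_combination h2
  have g3 : c' * u₂ ^ 2 - b * q * w ^ 2 = 2 * a * b * c' * t ^ 2 := by
    apply mul_left_cancel₀ hq0; linear_combination h3
  replace g2 := congrArg PadicInt.toZMod g2
  replace g3 := congrArg PadicInt.toZMod g3
  simp only [map_add, map_sub, map_mul, map_neg, map_pow, map_natCast, map_ofNat, 
    CharP.cast_eq_zero, zero_mul, mul_zero, sub_zero, add_zero] at g2 g3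
  have f2 : (PadicInt.toZMod u₃) ^ 2 = (a * e : ZMod q) * (PadicInt.toZMod t) ^ 2 := by
    apply mul_left_cancel₀ hc'; linear_combination g2
  have f3 : (PadicInt.toZMod u₂) ^ 2 = (2 * a * b : ZMod q) * (PadicInt.toZMod t) ^ 2 := by
    apply mul_left_cancel₀ hc'; linear_combination g3
  have ht : PadicInt.toZMod t ≠ 0 := by
    intro ht
    rw [ht] at f2 f3
    simp at f2 f3
    exact hn ⟨ht, d1, f3, f2⟩
  push_cast
  exact ⟨isSquare_of_eq ht f2, isSquare_of_eq ht f3⟩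

lemma fwd_e (he : q ∣ e) (he2 : ¬ q ^ 2 ∣ e) (hc : ¬ q ∣ c)
    (h : LSol ℚ_[q] a b c e) :
    IsSquare ((a * b : ℤ) : ZMod q) ∧ IsSquare ((-(a * c) : ℤ) : ZMod q) := by
  obtain ⟨t, u₁, u₂, u₃, hn, h1, h2, h3⟩ := LSol_primitive q a b c e h
  obtain ⟨e', rfl⟩ := he
  have he' : ¬ q ∣ e' := fun hd => he2 (by rw [pow_two]; exact mul_dvd_mul_left q hd)
  rw [← ZMod.natCast_eq_zero_iff] at hc he'
  have hq0 : (q : ℤ_[q]) ≠ 0 := by exact_mod_cast (Fact.out : q.Prime).ne_zero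
  simp only [← padicInt_toZMod_eq_zero_iff] at hn
  have d3 : PadicInt.toZMod u₃ = 0 := by
    have := congrArg PadicInt.toZMod h2
    simpa [hc] using this
  obtain ⟨w, rfl⟩ := (padicInt_toZMod_eq_zero_iff q u₃).mp d3
  push_cast at h1 h2
  have g1 : e' * u₂ ^ 2 - q * b * w ^ 2 = a * b * e' * t ^ 2 := by
    apply mul_left_cancel₀ hq0; linear_combination h1
  have g2 : c * q * w ^ 2 - e' * u₁ ^ 2 = a * c * e' * t ^ 2 := by
    apply mul_left_cancel₀ hq0; linear_combination h2
  replace g1 := congrArg PadicInt.toZMod g1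
  replace g2 := congrArg PadicInt.toZMod g2
  simp only [map_add, map_sub, map_mul, map_neg, map_pow, map_natCast, map_ofNat, 
    CharP.cast_eq_zero, zero_mul, mul_zero, sub_zero, zero_sub, add_zero] at g1 g2
  have f1 : (PadicInt.toZMod u₂) ^ 2 = (a * b : ZMod q) * (PadicInt.toZMod t) ^ 2 := by
    apply mul_left_cancel₀ he'; linear_combination g1
  have f2 : (PadicInt.toZMod u₁) ^ 2 = (-(a * c) : ZMod q) * (PadicInt.toZMod t) ^ 2 := by
    apply mul_left_cancel₀ he'; linear_combination -g2
  have ht : PadicInt.toZMod t ≠ 0 := by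
    intro ht
    rw [ht] at f1 f2
    simp at f1 f2
    exact hn ⟨ht, f2, f1, d3⟩
  push_cast
  exact ⟨isSquare_of_eq ht f1, isSquare_of_eq ht f2⟩
end fwd

section bwd
variable (q : ℕ) [Fact q.Prime]

lemma two_ne_zero_zmod (q : ℕ) [Fact q.Prime] (hq : q ≠ 2) : (2 : ZMod q) ≠ 0 := by
  intro h
  have : ((2 : ℕ) : ZMod q) = 0 := by exact_mod_cast h
  rw [ZMod.natCast_eq_zero_iff] at this
  exact hq ((Nat.prime_dvd_prime_iff_eq Fact.out Nat.prime_two).mp this)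

lemma bwd_a (hq : q ≠ 2) (a b c e : ℕ) (hb : ¬ q ∣ b) (hc : ¬ q ∣ c) (he : ¬ q ∣ e)
    (h1 : IsSquare ((b * e : ℤ) : ZMod q)) (h2 : IsSquare ((c * e : ℤ) : ZMod q)) :
    LSol ℚ_[q] a b c e := by
  rw [← ZMod.natCast_eq_zero_iff] at hb hc he
  obtain ⟨v, hv⟩ := isSquare_padic_odd q hq _ (by push_cast; exact mul_ne_zero hb he) h1
  obtain ⟨w, hw⟩ := isSquare_padic_odd q hq _ (by push_cast; exact mul_ne_zero hc he) h2
  have he' : (e : ℚ_[q]) ≠ 0 := by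
    rw [Nat.cast_ne_zero]; rintro rfl; simp at he
  push_cast at hv hw
  refine ⟨0, w / e, v / e, 1, by simp, ?_, ?_, ?_⟩
  · rw [div_pow, hv]; field_simp; ring
  · rw [div_pow, hw]; field_simp; ring
  · rw [div_pow, div_pow, hv, hw]; field_simp; ring

lemma bwd_b (hq : q ≠ 2) (a b c e : ℕ) (ha : ¬ q ∣ a) (hc : ¬ q ∣ c) (he : ¬ q ∣ e)
    (h1 : IsSquare ((-(a * e) : ℤ) : ZMod q)) (h2 : IsSquare ((-(2 * a * c) : ℤ) : ZMod q)) :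
    LSol ℚ_[q] a b c e := by
  rw [← ZMod.natCast_eq_zero_iff] at ha hc he
  have h20 := two_ne_zero_zmod q hq
  obtain ⟨v, hv⟩ := isSquare_padic_odd q hq _ (by push_cast; simp [ha, he]) h1
  obtain ⟨w, hw⟩ := isSquare_padic_odd q hq _ (by push_cast; simp [ha, hc, h20]) h2
  push_cast at hv hw
  refine ⟨1, w, 0, v, by simp, ?_, ?_, ?_⟩
  · rw [hv]; ring
  · rw [hv, hw]; ring
  · rw [hw]; ring

lemma bwd_c (hq : q ≠ 2) (a b c e : ℕ) (ha : ¬ q ∣ a) (hb : ¬ q ∣ b) (he : ¬ q ∣ e)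
    (h1 : IsSquare ((a * e : ℤ) : ZMod q)) (h2 : IsSquare ((2 * a * b : ℤ) : ZMod q)) :
    LSol ℚ_[q] a b c e := by
  rw [← ZMod.natCast_eq_zero_iff] at ha hb he
  have h20 := two_ne_zero_zmod q hq
  obtain ⟨v, hv⟩ := isSquare_padic_odd q hq _ (by push_cast; simp [ha, he]) h1
  obtain ⟨w, hw⟩ := isSquare_padic_odd q hq _ (by push_cast; simp [ha, hb, h20]) h2
  push_cast at hv hw
  refine ⟨1, 0, w, v, by simp, ?_, ?_, ?_⟩
  · rw [hv, hw]; ring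
  · rw [hv]; ring
  · rw [hw]; ring

lemma bwd_e (hq : q ≠ 2) (a b c e : ℕ) (ha : ¬ q ∣ a) (hb : ¬ q ∣ b) (hc : ¬ q ∣ c)
    (h1 : IsSquare ((a * b : ℤ) : ZMod q)) (h2 : IsSquare ((-(a * c) : ℤ) : ZMod q)) :
    LSol ℚ_[q] a b c e := by
  rw [← ZMod.natCast_eq_zero_iff] at ha hb hc
  obtain ⟨v, hv⟩ := isSquare_padic_odd q hq _ (by push_cast; simp [ha, hb]) h1
  obtain ⟨w, hw⟩ := isSquare_padic_odd q hq _ (by push_cast; simp [ha, hc]) h2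
  push_cast at hv hw
  refine ⟨1, w, v, 0, by simp, ?_, ?_, ?_⟩
  · rw [hv]; ring
  · rw [hw]; ring
  · rw [hv, hw]; ring

end bwd

section charsum
variable {F : Type} [Field F] [Fintype F] [DecidableEq F]

lemma sum_quadraticChar_affine (hF : ringChar F ≠ 2) (d r : F) (hd : d ≠ 0) :
    ∑ x : F, quadraticChar F (d * (x - r)) = 0 := by
  rw [← quadraticChar_sum_zero hF]
  exact Fintype.sum_bijective (fun x => d * (x - r))
    ((mulLeft_bijective₀ d hd).comp (Equiv.subRight r).bijective) _ _ (fun x => rfl)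

lemma sum_quadraticChar_pair (hF : ringChar F ≠ 2) (r s : F) (hrs : r ≠ s) :
    ∑ x : F, quadraticChar F ((x - r) * (x - s)) = -1 := by
  have hrs' : s - r ≠ 0 := sub_ne_zero.mpr hrs.symm
  have h1 : ∑ x : F, quadraticChar F ((x - r) * (x - s)) =
      ∑ y ∈ Finset.univ.erase (1 : F), quadraticChar F y := by
    rw [← Finset.sum_erase (Finset.univ) (a := s) (by simp)]
    refine Finset.sum_bij' (fun x _ => (x - r) / (x - s)) (fun y _ => (s * y - r) / (y - 1)) ?_ ?_ ?_ ?_ ?_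
    · intro x hx
      have hx' : x - s ≠ 0 := by simpa [sub_eq_zero] using hx
      simp only [Finset.mem_erase, Finset.mem_univ, and_true]
      intro h
      rw [div_eq_one_iff_eq hx'] at h
      exact hrs' (by linear_combination h)
    · intro y hy
      have hy' : y - 1 ≠ 0 := by simpa [sub_eq_zero] using hy
      simp only [Finset.mem_erase, Finset.mem_univ, and_true]
      intro h
      rw [div_eq_iff hy'] at h
      exact hrs' (by linear_combination h)
    · intro x hx
      have hx' : x - s ≠ 0 := by simpa [sub_eq_zero] using hx
      have : (x - r) / (x - s) - 1 ≠ 0 := by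
        rw [div_sub_one hx']
        apply div_ne_zero _ hx'
        convert hrs' using 1; ring
      rw [div_eq_iff this]
      field_simp
      ring
    · intro y hy
      have hy' : y - 1 ≠ 0 := by simpa [sub_eq_zero] using hy
      have e1 : (s * y - r) / (y - 1) - s = (s - r) / (y - 1) := by field_simp; ring
      have e2 : (s * y - r) / (y - 1) - r = (s - r) * y / (y - 1) := by field_simp; ring
      simp only [e1, e2]
      field_simp
    · intro x hx
      have hx' : x - s ≠ 0 := by simpa [sub_eq_zero] using hx
      have : (x - r) * (x - s) = (x - r) / (x - s) * (x - s) ^ 2 := by field_simp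
      rw [this, map_mul, quadraticChar_sq_one' hx', mul_one]
  rw [h1]
  have h2 := Finset.add_sum_erase Finset.univ (fun y => quadraticChar F y) (Finset.mem_univ (1 : F))
  rw [quadraticChar_sum_zero hF] at h2
  simp only [map_one] at h2
  linarith

lemma exists_point (hF : ringChar F ≠ 2) (n d₁ d₂ d₃ s : F) (hn : n ≠ 0) (h2 : (2 : F) ≠ 0)
    (h1 : d₁ ≠ 0) (h2' : d₂ ≠ 0) (h3 : d₃ ≠ 0) (h : d₁ * d₂ * d₃ = s ^ 2)
    (hns : ¬ (IsSquare d₁ ∧ IsSquare d₂)) :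
    ∃ x : F, IsSquare (d₁ * (x - n)) ∧ IsSquare (d₂ * (x + n)) ∧ IsSquare (d₃ * x) := by
  by_contra hcon
  push Not at hcon
  set χ := quadraticChar F with hχ
  have hs : s ≠ 0 := by
    rintro rfl
    simp [h1, h2', h3] at h
  have hprod : χ d₁ * χ d₂ * χ d₃ = 1 := by
    rw [← map_mul, ← map_mul, h, quadraticChar_sq_one' hs]
  have hsum3 : χ d₁ + χ d₂ + χ d₃ = -1 := by
    have e1 : χ d₁ = 1 ↔ IsSquare d₁ := quadraticChar_one_iff_isSquare h1
    have e2 : χ d₂ = 1 ↔ IsSquare d₂ := quadraticChar_one_iff_isSquare h2'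
    rw [← e1, ← e2] at hns
    rcases quadraticChar_dichotomy h1 with g1 | g1 <;> rcases quadraticChar_dichotomy h2' with g2 | g2 <;>
    rcases quadraticChar_dichotomy h3 with g3 | g3 <;> rw [← hχ] at g1 g2 g3 <;>
    simp [g1, g2, g3] at hprod hns ⊢
  have hz : ∀ x : F, (1 + χ (d₁ * (x - n))) * (1 + χ (d₂ * (x + n))) * (1 + χ (d₃ * x)) = 0 := by
    intro x
    have key : ∀ y : F, ¬ IsSquare y → 1 + χ y = 0 := by
      intro y hy
      rw [quadraticChar_neg_one_iff_not_isSquare.mpr hy]; norm_num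
    by_cases k1 : IsSquare (d₁ * (x - n))
    · by_cases k2 : IsSquare (d₂ * (x + n))
      · rw [key _ (hcon x k1 k2), mul_zero]
      · rw [key _ k2]; ring
    · rw [key _ k1]; ring
  have hexp : ∀ x : F, (1 + χ (d₁ * (x - n))) * (1 + χ (d₂ * (x + n))) * (1 + χ (d₃ * x)) =
      1 + χ (d₁ * (x - n)) + χ (d₂ * (x - (-n))) + χ (d₃ * (x - 0))
      + χ (d₁ * d₂) * χ ((x - n) * (x - (-n))) + χ (d₁ * d₃) * χ ((x - n) * (x - 0))
      + χ (d₂ * d₃) * χ ((x - (-n)) * (x - 0)) + χ ((x - n) * (x + n) * x) := by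
    intro x
    simp only [map_mul, sub_neg_eq_add, sub_zero]
    linear_combination (χ (x - n) * χ (x + n) * χ x) * hprod
  have htot := Finset.sum_congr rfl (fun x (_ : x ∈ (Finset.univ : Finset F)) => hexp x)
  rw [Finset.sum_eq_zero (fun x _ => hz x)] at htot
  simp only [Finset.sum_add_distrib, ← Finset.mul_sum] at htot
  have hnn : n ≠ -n := by
    intro h'
    have : 2 * n = 0 := by linear_combination h'
    exact (mul_ne_zero h2 hn) this
  rw [sum_quadraticChar_affine hF _ _ h1, sum_quadraticChar_affine hF _ _ h2',
    sum_quadraticChar_affine hF _ _ h3, sum_quadraticChar_pair hF _ _ hnn,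
    sum_quadraticChar_pair hF _ _ hn, sum_quadraticChar_pair hF _ _ (neg_ne_zero.mpr hn)] at htot
  have hpm : ∀ d : F, d ≠ 0 → χ d * χ d = 1 := by
    intro d hd
    rw [← pow_two]; exact quadraticChar_sq_one hd
  have e12 : χ (d₁ * d₂) = χ d₃ := by
    rw [map_mul]; linear_combination χ d₃ * hprod - χ d₁ * χ d₂ * hpm _ h3
  have e13 : χ (d₁ * d₃) = χ d₂ := by
    rw [map_mul]; linear_combination χ d₂ * hprod - χ d₁ * χ d₃ * hpm _ h2'
  have e23 : χ (d₂ * d₃) = χ d₁ := by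
    rw [map_mul]; linear_combination χ d₁ * hprod - χ d₂ * χ d₃ * hpm _ h1
  rw [e12, e13, e23] at htot
  have hge : 0 ≤ ∑ x : F, (1 + χ ((x - n) * (x + n) * x)) := by
    apply Finset.sum_nonneg
    intro x _
    by_cases hx : (x - n) * (x + n) * x = 0
    · rw [hx, quadraticChar_zero]; norm_num
    · rcases quadraticChar_dichotomy hx with g | g <;> rw [← hχ] at g <;> rw [g] <;> norm_num
  rw [Finset.sum_add_distrib] at hge
  linarith
end charsum

lemma LSol_good (q : ℕ) [Fact q.Prime] (hq : q ≠ 2) (a b c e : ℕ) (ha : ¬ q ∣ a) (hb : ¬ q ∣ b)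
    (hc : ¬ q ∣ c) (he : ¬ q ∣ e) : LSol ℚ_[q] a b c e := by
  by_cases hsq : IsSquare ((b * e : ℤ) : ZMod q) ∧ IsSquare ((c * e : ℤ) : ZMod q)
  · exact bwd_a q hq a b c e hb hc he hsq.1 hsq.2
  have ha0 : a ≠ 0 := by rintro rfl; simp at ha
  have hb0 : b ≠ 0 := by rintro rfl; simp at hb
  have hc0 : c ≠ 0 := by rintro rfl; simp at hc
  have he0 : e ≠ 0 := by rintro rfl; simp at he
  rw [← ZMod.natCast_eq_zero_iff] at ha hb hc he
  have h20 := two_ne_zero_zmod q hq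
  have hF : ringChar (ZMod q) ≠ 2 := by rw [ZMod.ringChar_zmod_n]; exact hq
  push_cast at hsq
  obtain ⟨x, hx1, hx2, hx3⟩ := exists_point hF (a * b * c * e : ZMod q) (b * e) (c * e) (b * c) (b * c * e)
    (by simp [ha, hb, hc, he]) h20 (by simp [hb, he]) (by simp [hc, he]) (by simp [hb, hc])
    (by ring) hsq
  -- it suffices to find an integer X such that each value is zero or a nonzero square mod q
  have key : ∀ X : ℤ, (∀ m ∈ [(b * e * (X - a * b * c * e) : ℤ), c * e * (X + a * b * c * e), b * c * X],
      m = 0 ∨ ((m : ZMod q) ≠ 0 ∧ IsSquare (m : ZMod q))) → LSol ℚ_[q] a b c e := by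
    intro X hX
    have hX' : ∀ m ∈ [(b * e * (X - a * b * c * e) : ℤ), c * e * (X + a * b * c * e), b * c * X],
        ∃ u : ℚ_[q], u ^ 2 = m := by
      intro m hm
      rcases hX m hm with h | h
      · exact ⟨0, by simp [h]⟩
      · exact isSquare_padic_odd q hq m h.1 h.2
    simp only [List.mem_cons, List.not_mem_nil, or_false, forall_eq_or_imp, forall_eq] at hX'
    obtain ⟨⟨v₁, h1⟩, ⟨v₂, h2⟩, ⟨v₃, h3⟩⟩ := hX'
    push_cast at h1 h2 h3
    have hb' : (b : ℚ_[q]) ≠ 0 := by exact_mod_cast hb0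
    have hc' : (c : ℚ_[q]) ≠ 0 := by exact_mod_cast hc0
    have he' : (e : ℚ_[q]) ≠ 0 := by exact_mod_cast he0
    refine ⟨1, v₁ / (b * e), v₂ / (c * e), v₃ / (b * c), by simp, ?_, ?_, ?_⟩
    · rw [div_pow, div_pow, h2, h3]; field_simp; ring
    · rw [div_pow, div_pow, h1, h3]; field_simp; ring
    · rw [div_pow, div_pow, h1, h2]; field_simp; ring
  obtain ⟨X, rfl⟩ := ZMod.intCast_surjective x
  simp only [List.mem_cons, List.not_mem_nil, or_false, forall_eq_or_imp, forall_eq] at key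
  by_cases c1 : (X : ZMod q) - a * b * c * e = 0
  · have hX : (X : ZMod q) = a * b * c * e := by linear_combination c1
    refine key (a * b * c * e) ⟨Or.inl (by ring), Or.inr ?_, Or.inr ?_⟩ <;> push_cast <;>
    rw [hX] at hx2 hx3
    · refine ⟨?_, hx2⟩
      rw [← two_mul]; simp [ha, hb, hc, he, h20]
    · exact ⟨by simp [ha, hb, hc, he], hx3⟩
  by_cases c2 : (X : ZMod q) + a * b * c * e = 0
  · have hX : (X : ZMod q) = -(a * b * c * e) := by linear_combination c2
    refine key (-(a * b * c * e)) ⟨Or.inr ?_, Or.inl (by ring), Or.inr ?_⟩ <;> push_cast <;>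
    rw [hX] at hx1 hx3
    · refine ⟨?_, hx1⟩
      rw [show (-(a * b * c * e : ZMod q) - a * b * c * e) = -(2 * (a * b * c * e)) by ring]
      simp [ha, hb, hc, he, h20]
    · exact ⟨by simp [ha, hb, hc, he], hx3⟩
  by_cases c3 : (X : ZMod q) = 0
  · rw [c3] at hx1 hx2
    refine key 0 ⟨Or.inr ?_, Or.inr ?_, Or.inl (by ring)⟩ <;> push_cast
    · exact ⟨by simp [ha, hb, hc, he], hx1⟩
    · exact ⟨by simp [ha, hb, hc, he], hx2⟩
  refine key X ⟨Or.inr ?_, Or.inr ?_, Or.inr ?_⟩ <;> push_cast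
  · exact ⟨mul_ne_zero (mul_ne_zero hb he) c1, hx1⟩
  · exact ⟨mul_ne_zero (mul_ne_zero hc he) c2, hx2⟩
  · exact ⟨mul_ne_zero (mul_ne_zero hb hc) c3, hx3⟩

lemma jacobiSym_eq_one_of_squares (m : ℤ) (b : ℕ)
    (h : ∀ q : ℕ, q.Prime → q ∣ b → (m : ZMod q) ≠ 0 ∧ IsSquare (m : ZMod q)) :
    jacobiSym m b = 1 := by
  unfold jacobiSym
  apply List.prod_eq_one
  intro x hx
  rw [List.mem_pmap] at hx
  obtain ⟨q, hq, rfl⟩ := hx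
  have hqp := Nat.prime_of_mem_primeFactorsList hq
  have hh := h q hqp (Nat.dvd_of_mem_primeFactorsList hq)
  haveI : Fact q.Prime := ⟨hqp⟩
  exact (legendreSym.eq_one_iff q hh.1).mpr hh.2

lemma recip_pair (x y : ℕ) (hx : Odd x) (hy : Odd y) (h : Nat.Coprime x y) :
    (jacobiSym x y = 1 ∨ jacobiSym x y = -1) ∧
    jacobiSym y x = (if x % 4 = 3 ∧ y % 4 = 3 then -1 else 1) * jacobiSym x y := by
  refine ⟨jacobiSym.eq_one_or_neg_one (by simpa using h), ?_⟩
  have := jacobiSym.quadratic_reciprocity_if (Nat.odd_iff.mp hx) (Nat.odd_iff.mp hy)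
  rw [← this]
  split_ifs <;> simp

lemma at_neg_one' (x : ℕ) (hx : Odd x) : jacobiSym (-1) x = if x % 4 = 3 then -1 else 1 := by
  rw [jacobiSym.at_neg_one hx, ZMod.χ₄_nat_eq_if_mod_four]
  have := Nat.odd_iff.mp hx
  split_ifs <;> omega

lemma recip_main (a b c e : ℕ) (ha : Odd a) (hb : Odd b) (hc : Odd c) (he : Odd e)
    (hab : Nat.Coprime a b) (hac : Nat.Coprime a c) (hae : Nat.Coprime a e)
    (hbc : Nat.Coprime b c) (hbe : Nat.Coprime b e) (hce : Nat.Coprime c e)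
    (h1 : jacobiSym (b * e) a = 1) (h2 : jacobiSym (c * e) a = 1)
    (h3 : jacobiSym (-(a * e)) b = 1) (h4 : jacobiSym (-(2 * a * c)) b = 1)
    (h5 : jacobiSym (a * e) c = 1) (h6 : jacobiSym (2 * a * b) c = 1)
    (h7 : jacobiSym (a * b) e = 1) (h8 : jacobiSym (-(a * c)) e = 1) :
    ((b * e % 4 = 1 ∧ c * e % 4 = 1) ∨ (a * b % 4 = 1 ∧ a * c % 4 = 3)) ∧
    (b * c % 8 = 1 ∨ b * c % 8 = 7) := by
  have hbc2 : Odd (b * c) := hb.mul hc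
  have h2bc : jacobiSym 2 (b * c) = jacobiSym 2 b * jacobiSym 2 c :=
    jacobiSym.mul_right' _ hb.pos.ne' hc.pos.ne'
  have h2b : jacobiSym 2 b = 1 ∨ jacobiSym 2 b = -1 :=
    jacobiSym.eq_one_or_neg_one (by
      have : Nat.Coprime 2 b := Nat.coprime_two_left.mpr hb
      exact_mod_cast this)
  have h2c : jacobiSym 2 c = 1 ∨ jacobiSym 2 c = -1 :=
    jacobiSym.eq_one_or_neg_one (by
      have : Nat.Coprime 2 c := Nat.coprime_two_left.mpr hc
      exact_mod_cast this)
  rw [neg_eq_neg_one_mul] at h3 h4 h8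
  simp only [jacobiSym.mul_left] at h1 h2 h3 h4 h5 h6 h7 h8
  rw [at_neg_one' _ hb] at h3 h4
  rw [at_neg_one' _ he] at h8
  have e8 : jacobiSym 2 (b * c) = 1 → b * c % 8 = 1 ∨ b * c % 8 = 7 := by
    rw [jacobiSym.at_two hbc2, ZMod.χ₈_nat_eq_if_mod_eight]
    have := Nat.odd_iff.mp hbc2
    split_ifs with k1 k2
    · omega
    · intro _; exact k2
    · intro h; norm_num at h
  obtain ⟨pab, rab⟩ := recip_pair a b ha hb hab
  obtain ⟨pac, rac⟩ := recip_pair a c ha hc hac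
  obtain ⟨pae, rae⟩ := recip_pair a e ha he hae
  obtain ⟨pbc, rbc⟩ := recip_pair b c hb hc hbc
  obtain ⟨pbe, rbe⟩ := recip_pair b e hb he hbe
  obtain ⟨pce, rce⟩ := recip_pair c e hc he hce
  rw [rab, rae] at h1
  rw [rac, rae] at h2
  rw [rbe] at h3
  rw [rbc] at h4
  rw [rce] at h5
  rw [Nat.mul_mod b e, Nat.mul_mod c e, Nat.mul_mod a b, Nat.mul_mod a c]
  have m4 : ∀ x : ℕ, Odd x → x % 4 = 1 ∨ x % 4 = 3 := by
    intro x hx; have := Nat.odd_iff.mp hx; omega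
  clear rab rac rae rbc rbe rce
  generalize jacobiSym a b = Jab at *
  generalize jacobiSym a c = Jac at *
  generalize jacobiSym a e = Jae at *
  generalize jacobiSym b c = Jbc at *
  generalize jacobiSym b e = Jbe at *
  generalize jacobiSym c e = Jce at *
  generalize jacobiSym 2 b = J2b at *
  generalize jacobiSym 2 c = J2c at *
  rw [h2bc] at e8
  have fin : ((b % 4 * (e % 4) % 4 = 1 ∧ c % 4 * (e % 4) % 4 = 1) ∨
     (a % 4 * (b % 4) % 4 = 1 ∧ a % 4 * (c % 4) % 4 = 3)) ∧ J2b * J2c = 1 := by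
    clear e8 h2bc
    rcases m4 a ha with qa | qa <;> rcases m4 b hb with qb | qb <;>
    rcases m4 c hc with qc | qc <;> rcases m4 e he with qe | qe <;>
    simp [qa, qb, qc, qe] at * <;>
    rcases pab with rfl | rfl <;> rcases pac with rfl | rfl <;> rcases pae with rfl | rfl <;>
    simp at * <;> grind
  exact ⟨fin.1, e8 fin.2⟩
lemma aLeg_eq_zero_iff (x : ℤ) (q : ℕ) : aLeg x q = 0 ↔ IsSquare (x : ZMod q) := by
  unfold aLeg; split_ifs with h <;> simp [h]

lemma aLeg_mul (q : ℕ) [Fact q.Prime] (x y : ℤ) (hx : (x : ZMod q) ≠ 0) (hy : (y : ZMod q) ≠ 0) :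
    aLeg (x * y) q = aLeg x q + aLeg y q := by
  have hxy : ((x * y : ℤ) : ZMod q) ≠ 0 := by push_cast; exact mul_ne_zero hx hy
  unfold aLeg
  have h := quadraticChar_one_iff_isSquare hxy
  rw [← quadraticChar_one_iff_isSquare hx, ← quadraticChar_one_iff_isSquare hy,
    ← quadraticChar_one_iff_isSquare hxy]
  push_cast
  rw [map_mul]
  have h11 : (1 + 1 : ZMod 2) = 0 := by decide
  rcases quadraticChar_dichotomy hx with g1 | g1 <;> rcases quadraticChar_dichotomy hy with g2 | g2 <;>
  rw [g1, g2] <;> norm_num [h11]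

lemma aLeg_one (q : ℕ) : aLeg 1 q = 0 := by
  rw [aLeg_eq_zero_iff]; exact ⟨1, by simp⟩

lemma aLeg_prod {ι : Type} (q : ℕ) [Fact q.Prime] (p : ι → ℕ) (S : Finset ι)
    (h : ∀ j ∈ S, (p j : ZMod q) ≠ 0) :
    aLeg ((∏ j ∈ S, p j : ℕ) : ℤ) q = ∑ j ∈ S, aLeg (p j) q := by
  classical
  induction S using Finset.induction_on with
  | empty => simp [aLeg_one]
  | insert j S hj ih =>
    rw [Finset.prod_insert hj, Finset.sum_insert hj, Nat.cast_mul, aLeg_mul, ih]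
    · intro l hl; exact h l (Finset.mem_insert_of_mem hl)
    · have := h j (Finset.mem_insert_self _ _); exact_mod_cast this
    · push_cast
      rw [Finset.prod_ne_zero_iff]
      intro l hl; exact h l (Finset.mem_insert_of_mem hl)

section link
variable (k : ℕ) (p : Fin k → ℕ) (hp : ∀ i, (p i).Prime) (hinj : Function.Injective p)

lemma squarefree_prod_primes (hp : ∀ i, (p i).Prime) (hinj : Function.Injective p) (S : Finset (Fin k)) :
    Squarefree (∏ j ∈ S, p j) := by
  classical
  induction S using Finset.induction_on with
  | empty => simp
  | insert j S hj ih =>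
    rw [Finset.prod_insert hj, Nat.squarefree_mul]
    · exact ⟨(hp j).squarefree, ih⟩
    · apply Nat.Coprime.prod_right
      intro l hl
      rw [Nat.coprime_primes (hp j) (hp l)]
      intro h
      exact hj (hinj h ▸ hl)

lemma dvd_eq_prod (hp : ∀ i, (p i).Prime) (hinj : Function.Injective p) (m : ℕ) (hm : m ∣ ∏ i, p i) :
    m = ∏ j ∈ Finset.univ.filter (fun j => p j ∣ m), p j := by
  have hsq := squarefree_prod_primes k p hp hinj Finset.univ
  rw [Nat.Squarefree.ext_iff (hsq.squarefree_of_dvd hm) (squarefree_prod_primes k p hp hinj _)]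
  intro q hq
  rw [hq.prime.dvd_finset_prod_iff]
  constructor
  · intro h
    obtain ⟨j, -, hj⟩ := (hq.prime.dvd_finset_prod_iff _).mp (h.trans hm)
    have := (Nat.prime_dvd_prime_iff_eq hq (hp j)).mp hj
    subst this
    exact ⟨j, by simpa using h, dvd_rfl⟩
  · rintro ⟨j, hj, h⟩
    have hj' : p j ∣ m := by simpa using hj
    exact h.trans hj'

lemma val_eq (hp : ∀ i, (p i).Prime) (hinj : Function.Injective p) (d : ℕ) (hd : d ∣ ∏ i, p i) (i : Fin k) :
    (padicValNat (p i) d : ZMod 2) = if p i ∣ d then 1 else 0 := by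
  have hsq := squarefree_prod_primes k p hp hinj Finset.univ
  have hds := hsq.squarefree_of_dvd hd
  have hd0 : d ≠ 0 := hds.ne_zero
  haveI : Fact (p i).Prime := ⟨hp i⟩
  split_ifs with h
  · have h1 : padicValNat (p i) d ≤ 1 := by
      rw [← Nat.factorization_def _ (hp i)]
      exact hds.natFactorization_le_one _
    have h2 : 1 ≤ padicValNat (p i) d := one_le_padicValNat_of_dvd hd0 h
    have : padicValNat (p i) d = 1 := by omega
    simp [this]
  · rw [padicValNat.eq_zero_of_not_dvd h]; simp

lemma Arow (hp : ∀ i, (p i).Prime) (hinj : Function.Injective p) (d d' : ℕ) (hd : d * d' = ∏ i, p i) (i : Fin k) :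
    ∑ j, monskyA k p i j * (padicValNat (p j) d : ZMod 2) =
      aLeg ((if p i ∣ d then d' else d : ℕ) : ℤ) (p i) := by
  haveI : Fact (p i).Prime := ⟨hp i⟩
  have hsq := squarefree_prod_primes k p hp hinj Finset.univ
  have hcop : Nat.Coprime d d' := Nat.coprime_of_squarefree_mul (hd ▸ hsq)
  have hdd : d ∣ ∏ i, p i := ⟨d', hd.symm⟩
  have hdd' : d' ∣ ∏ i, p i := ⟨d, by rw [← hd, mul_comm]⟩
  have hexcl : ∀ j, p j ∣ d' ↔ ¬ p j ∣ d := by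
    intro j
    constructor
    · intro h1 h2
      have := Nat.dvd_gcd h2 h1
      rw [hcop] at this
      exact (hp j).one_lt.ne' (Nat.dvd_one.mp this)
    · intro h1
      have : p j ∣ d * d' := hd ▸ Finset.dvd_prod_of_mem p (Finset.mem_univ j)
      exact ((hp j).dvd_mul.mp this).resolve_left h1
  set m : ℕ := if p i ∣ d then d' else d with hm
  have hmn : m ∣ ∏ i, p i := by rw [hm]; split_ifs <;> assumption
  have him : ¬ p i ∣ m := by
    rw [hm]; split_ifs with h
    · rw [hexcl]; simpa using h
    · exact h
  rw [dvd_eq_prod k p hp hinj m hmn, aLeg_prod]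
  swap
  · intro j hj h0
    rw [ZMod.natCast_eq_zero_iff, Nat.prime_dvd_prime_iff_eq (hp i) (hp j)] at h0
    have hj' : p j ∣ m := by simpa using hj
    exact him (h0 ▸ hj')
  simp only [val_eq k p hp hinj d hdd]
  rw [← Finset.add_sum_erase _ _ (Finset.mem_univ i)]
  rw [Finset.sum_filter, ← Finset.add_sum_erase (Finset.univ) (fun j => if p j ∣ m then _ else _) (Finset.mem_univ i)]
  simp only [him, if_false, zero_add]
  have hAii : monskyA k p i i = ∑ j ∈ Finset.univ.erase i, aLeg (p j) (p i) := by
    simp only [monskyA, Matrix.of_apply, if_true]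
    apply Finset.sum_congr _ (fun _ _ => rfl)
    ext; simp
  rw [hAii, Finset.sum_mul, ← Finset.sum_add_distrib]
  apply Finset.sum_congr rfl
  intro j hj
  have hji : i ≠ j := fun h => by simp [h] at hj
  have hAij : monskyA k p i j = aLeg (p j) (p i) := by
    simp [monskyA, hji]
  rw [hAij, hm]
  have h2 : ∀ x : ZMod 2, x + x = 0 := by decide
  by_cases h1 : p i ∣ d <;> by_cases h3 : p j ∣ d <;> simp [h1, h3, hexcl, h2]
end link

/-- The two conditions at a prime dividing `n`. -/
def LCond (q : ℕ) (a b c e : ℕ) : Prop :=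
  aLeg ((if q ∣ b * e then a * c else b * e : ℕ) : ℤ) q +
    aLeg (-2) q * (if q ∣ b * e then 1 else 0) + aLeg 2 q * (if q ∣ c * e then 1 else 0) = 0 ∧
  aLeg ((if q ∣ c * e then a * b else c * e : ℕ) : ℤ) q +
    aLeg 2 q * (if q ∣ b * e then 1 else 0) + aLeg 2 q * (if q ∣ c * e then 1 else 0) = 0

lemma monsky_iff (k : ℕ) (p : Fin k → ℕ) (hp : ∀ i, (p i).Prime) (hinj : Function.Injective p)
    (a b c e : ℕ) (hn : a * b * c * e = ∏ i, p i) :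
    (monskyM k p).mulVec
      (Sum.elim (fun i => (padicValNat (p i) (b * e) : ZMod 2))
        (fun i => (padicValNat (p i) (c * e) : ZMod 2))) = 0 ↔ ∀ i, LCond (p i) a b c e := by
  have h1 : (b * e) * (a * c) = ∏ i, p i := by rw [← hn]; ring
  have h2 : (c * e) * (a * b) = ∏ i, p i := by rw [← hn]; ring
  have k1 := Arow k p hp hinj _ _ h1
  have k2 := Arow k p hp hinj _ _ h2
  have v1 := val_eq k p hp hinj (b * e) ⟨_, h1.symm⟩
  have v2 := val_eq k p hp hinj (c * e) ⟨_, h2.symm⟩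
  have e1 : ∀ d : ℕ, (monskyA k p).mulVec (fun i => (padicValNat (p i) d : ZMod 2)) =
      fun i => ∑ j, monskyA k p i j * (padicValNat (p j) d : ZMod 2) := by
    intro d; rfl
  rw [monskyM, Matrix.fromBlocks_mulVec]
  simp only [Matrix.add_mulVec, monskyD, Sum.elim_comp_inl, Sum.elim_comp_inr, e1, k1, k2]
  rw [funext_iff, Sum.forall, ← forall_and]
  apply forall_congr'
  intro i
  simp only [Sum.elim_inl, Sum.elim_inr, Pi.add_apply, Matrix.mulVec_diagonal, v1, v2, Pi.zero_apply, LCond]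
  apply and_congr
  · rfl
  · rw [add_left_comm, ← add_assoc]

lemma LCond_iff (q : ℕ) [Fact q.Prime] (hq : q ≠ 2) (a b c e : ℕ) :
    (¬ q ∣ b → ¬ q ∣ c → ¬ q ∣ e → q ∣ a → (LCond q a b c e ↔
      IsSquare ((b * e : ℤ) : ZMod q) ∧ IsSquare ((c * e : ℤ) : ZMod q))) ∧
    (¬ q ∣ a → ¬ q ∣ c → ¬ q ∣ e → q ∣ b → (LCond q a b c e ↔
      IsSquare ((-(a * e) : ℤ) : ZMod q) ∧ IsSquare ((-(2 * a * c) : ℤ) : ZMod q))) ∧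
    (¬ q ∣ a → ¬ q ∣ b → ¬ q ∣ e → q ∣ c → (LCond q a b c e ↔
      IsSquare ((a * e : ℤ) : ZMod q) ∧ IsSquare ((2 * a * b : ℤ) : ZMod q))) ∧
    (¬ q ∣ a → ¬ q ∣ b → ¬ q ∣ c → q ∣ e → (LCond q a b c e ↔
      IsSquare ((a * b : ℤ) : ZMod q) ∧ IsSquare ((-(a * c) : ℤ) : ZMod q))) := by
  have hpr : q.Prime := Fact.out
  have h20 : ((2 : ℤ) : ZMod q) ≠ 0 := by exact_mod_cast two_ne_zero_zmod q hq
  have h10 : ((-1 : ℤ) : ZMod q) ≠ 0 := by simp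
  have cz : ∀ x : ℕ, ¬ q ∣ x → (((x : ℕ) : ℤ) : ZMod q) ≠ 0 := by
    intro x hx
    rw [← ZMod.natCast_eq_zero_iff] at hx
    exact_mod_cast hx
  have m2 : aLeg (-2) q = aLeg (-1) q + aLeg 2 q := by
    rw [← aLeg_mul q _ _ h10 h20]; rfl
  have mm : ∀ x y : ℕ, ¬ q ∣ x → ¬ q ∣ y → aLeg ((x : ℤ) * y) q = aLeg x q + aLeg y q :=
    fun x y hx hy => aLeg_mul q _ _ (cz x hx) (cz y hy)
  have nz : ∀ x y : ℤ, (x : ZMod q) ≠ 0 → (y : ZMod q) ≠ 0 → ((x * y : ℤ) : ZMod q) ≠ 0 := by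
    intro x y hx hy; push_cast; exact mul_ne_zero hx hy
  refine ⟨?_, ?_, ?_, ?_⟩
  · intro hb hc he ha
    have g1 : ¬ q ∣ b * e := by rw [hpr.dvd_mul]; tauto
    have g2 : ¬ q ∣ c * e := by rw [hpr.dvd_mul]; tauto
    simp only [LCond, g1, g2, if_false, mul_zero, add_zero, aLeg_eq_zero_iff]
    push_cast; rfl
  · intro ha hc he hb
    have g1 : q ∣ b * e := hb.mul_right e
    have g2 : ¬ q ∣ c * e := by rw [hpr.dvd_mul]; tauto
    simp only [LCond, g1, g2, if_true, if_false, mul_zero, mul_one, add_zero, ← aLeg_eq_zero_iff, Nat.cast_mul]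
    rw [neg_eq_neg_one_mul ((a : ℤ) * e), neg_eq_neg_one_mul (2 * (a : ℤ) * c),
      aLeg_mul q _ _ h10 (nz _ _ (cz a ha) (cz e he)),
      aLeg_mul q _ _ h10 (nz _ _ (nz _ _ h20 (cz a ha)) (cz c hc)),
      aLeg_mul q _ _ (nz _ _ h20 (cz a ha)) (cz c hc), aLeg_mul q _ _ h20 (cz a ha),
      mm a e ha he, mm a c ha hc, mm c e hc he, m2]
    generalize aLeg a q = A
    generalize aLeg c q = C
    generalize aLeg e q = E
    generalize aLeg 2 q = T
    generalize aLeg (-1) q = N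
    revert A C E T N
    decide
  · intro ha hb he hc
    have g1 : q ∣ c * e := hc.mul_right e
    have g2 : ¬ q ∣ b * e := by rw [hpr.dvd_mul]; tauto
    simp only [LCond, g1, g2, if_true, if_false, mul_zero, mul_one, add_zero, ← aLeg_eq_zero_iff, Nat.cast_mul]
    rw [aLeg_mul q _ _ (nz _ _ h20 (cz a ha)) (cz b hb), aLeg_mul q _ _ h20 (cz a ha),
      mm a e ha he, mm a b ha hb, mm b e hb he]
    generalize aLeg a q = A
    generalize aLeg b q = B
    generalize aLeg e q = E
    generalize aLeg 2 q = T
    revert A B E T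
    decide
  · intro ha hb hc he
    have g1 : q ∣ c * e := he.mul_left c
    have g2 : q ∣ b * e := he.mul_left b
    simp only [LCond, g1, g2, if_true, mul_one, ← aLeg_eq_zero_iff, Nat.cast_mul]
    rw [neg_eq_neg_one_mul ((a : ℤ) * c), aLeg_mul q _ _ h10 (nz _ _ (cz a ha) (cz c hc)),
      mm a b ha hb, mm a c ha hc, m2]
    generalize aLeg a q = A
    generalize aLeg b q = B
    generalize aLeg c q = C
    generalize aLeg 2 q = T
    generalize aLeg (-1) q = N
    revert A B C T N
    decide
lemma cop_excl {x y q : ℕ} (h : Nat.Coprime x y) (hq : q.Prime) (hx : q ∣ x) : ¬ q ∣ y := fun hy =>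
  hq.one_lt.ne' (Nat.dvd_one.mp (h ▸ Nat.dvd_gcd hx hy))

lemma core (k : ℕ) (p : Fin k → ℕ) (hp : ∀ i, (p i).Prime) (hinj : Function.Injective p)
    (a b c e : ℕ) (hn : a * b * c * e = ∏ i, p i) (hodd : Odd (a * b * c * e)) :
    (LSol ℝ a b c e ∧ ∀ (q : ℕ) [Fact q.Prime], LSol ℚ_[q] a b c e) ↔
      ∀ i, LCond (p i) a b c e := by
  have hsq : Squarefree (a * b * c * e) := hn ▸ squarefree_prod_primes k p hp hinj Finset.univ
  have hc1 := Nat.coprime_of_squarefree_mul hsq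
  have hsq2 : Squarefree (a * b * c) := hsq.squarefree_of_dvd (Dvd.intro _ rfl)
  have hc2 := Nat.coprime_of_squarefree_mul hsq2
  have hsq3 : Squarefree (a * b) := hsq2.squarefree_of_dvd (Dvd.intro _ rfl)
  have hab := Nat.coprime_of_squarefree_mul hsq3
  rw [Nat.coprime_mul_iff_left, Nat.coprime_mul_iff_left] at hc1
  rw [Nat.coprime_mul_iff_left] at hc2
  obtain ⟨⟨hae, hbe⟩, hce⟩ := hc1
  obtain ⟨hac, hbc⟩ := hc2
  have hsa : Squarefree a := hsq3.squarefree_of_dvd (Dvd.intro _ rfl)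
  have hsb : Squarefree b := hsq3.squarefree_of_dvd (Dvd.intro_left _ rfl)
  have hsc : Squarefree c := hsq2.squarefree_of_dvd (Dvd.intro_left _ rfl)
  have hse : Squarefree e := hsq.squarefree_of_dvd (Dvd.intro_left _ rfl)
  rw [Nat.odd_mul, Nat.odd_mul, Nat.odd_mul] at hodd
  obtain ⟨⟨⟨oa, ob⟩, oc⟩, oe⟩ := hodd
  have nsq : ∀ {x q : ℕ}, Squarefree x → q.Prime → ¬ q ^ 2 ∣ x := by
    intro x q hx hq h
    rw [pow_two] at h
    exact hq.one_lt.ne' (Nat.isUnit_iff.mp (hx q h))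
  have odd2 : ∀ {x q : ℕ}, Odd x → q ∣ x → q ≠ 2 := by
    rintro x q hx h rfl
    exact (Nat.not_even_iff_odd.mpr hx) (even_iff_two_dvd.mpr h)
  have hind : ∀ {x q : ℕ}, q.Prime → q ∣ x → x ∣ a * b * c * e → ∃ i, p i = q := by
    intro x q hq hqx hx
    have := (hqx.trans hx)
    rw [hn, hq.prime.dvd_finset_prod_iff] at this
    obtain ⟨i, -, hi⟩ := this
    exact ⟨i, ((Nat.prime_dvd_prime_iff_eq hq (hp i)).mp hi).symm⟩
  constructor
  · rintro ⟨-, H⟩ i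
    haveI : Fact (p i).Prime := ⟨hp i⟩
    have hq := hp i
    have hd : p i ∣ a * b * c * e := hn ▸ Finset.dvd_prod_of_mem p (Finset.mem_univ i)
    have L := H (p i)
    revert hq hd L
    generalize p i = q at *
    intro hq hd L
    rw [hq.dvd_mul, hq.dvd_mul, hq.dvd_mul] at hd
    rcases hd with ((h | h) | h) | h
    · have n1 := cop_excl hab hq h
      have n2 := cop_excl hac hq h
      have n3 := cop_excl hae hq h
      exact ((LCond_iff q (odd2 oa h) a b c e).1 n1 n2 n3 h).mpr
        (fwd_a q a b c e h (nsq hsa hq) n1 n2 n3 L)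
    · have n1 := cop_excl hab.symm hq h
      have n2 := cop_excl hbc hq h
      have n3 := cop_excl hbe hq h
      exact ((LCond_iff q (odd2 ob h) a b c e).2.1 n1 n2 n3 h).mpr
        (fwd_b q a b c e h (nsq hsb hq) n3 L)
    · have n1 := cop_excl hac.symm hq h
      have n2 := cop_excl hbc.symm hq h
      have n3 := cop_excl hce hq h
      exact ((LCond_iff q (odd2 oc h) a b c e).2.2.1 n1 n2 n3 h).mpr
        (fwd_c q a b c e h (nsq hsc hq) n3 L)
    · have n1 := cop_excl hae.symm hq h
      have n2 := cop_excl hbe.symm hq h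
      have n3 := cop_excl hce.symm hq h
      exact ((LCond_iff q (odd2 oe h) a b c e).2.2.2 n1 n2 n3 h).mpr
        (fwd_e q a b c e h (nsq hse hq) n3 L)
  · intro H
    have Ha : ∀ q : ℕ, q.Prime → q ∣ a →
        IsSquare ((b * e : ℤ) : ZMod q) ∧ IsSquare ((c * e : ℤ) : ZMod q) := by
      intro q hq h
      haveI : Fact q.Prime := ⟨hq⟩
      obtain ⟨i, hi⟩ := hind hq h ⟨b * c * e, by ring⟩
      have := H i
      rw [hi] at this
      exact ((LCond_iff q (odd2 oa h) a b c e).1 (cop_excl hab hq h) (cop_excl hac hq h)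
        (cop_excl hae hq h) h).mp this
    have Hb : ∀ q : ℕ, q.Prime → q ∣ b →
        IsSquare ((-(a * e) : ℤ) : ZMod q) ∧ IsSquare ((-(2 * a * c) : ℤ) : ZMod q) := by
      intro q hq h
      haveI : Fact q.Prime := ⟨hq⟩
      obtain ⟨i, hi⟩ := hind hq h ⟨a * c * e, by ring⟩
      have := H i
      rw [hi] at this
      exact ((LCond_iff q (odd2 ob h) a b c e).2.1 (cop_excl hab.symm hq h) (cop_excl hbc hq h)
        (cop_excl hbe hq h) h).mp this
    have Hc : ∀ q : ℕ, q.Prime → q ∣ c →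
        IsSquare ((a * e : ℤ) : ZMod q) ∧ IsSquare ((2 * a * b : ℤ) : ZMod q) := by
      intro q hq h
      haveI : Fact q.Prime := ⟨hq⟩
      obtain ⟨i, hi⟩ := hind hq h ⟨a * b * e, by ring⟩
      have := H i
      rw [hi] at this
      exact ((LCond_iff q (odd2 oc h) a b c e).2.2.1 (cop_excl hac.symm hq h)
        (cop_excl hbc.symm hq h) (cop_excl hce hq h) h).mp this
    have He : ∀ q : ℕ, q.Prime → q ∣ e →
        IsSquare ((a * b : ℤ) : ZMod q) ∧ IsSquare ((-(a * c) : ℤ) : ZMod q) := by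
      intro q hq h
      haveI : Fact q.Prime := ⟨hq⟩
      obtain ⟨i, hi⟩ := hind hq h ⟨a * b * c, by ring⟩
      have := H i
      rw [hi] at this
      exact ((LCond_iff q (odd2 oe h) a b c e).2.2.2 (cop_excl hae.symm hq h)
        (cop_excl hbe.symm hq h) (cop_excl hce.symm hq h) h).mp this
    refine ⟨LSol_real a b c e hsb.ne_zero hsc.ne_zero hse.ne_zero, ?_⟩
    intro q hqf
    have hq : q.Prime := hqf.out
    by_cases hq2 : q = 2
    · subst hq2
      have nzc : ∀ {q x y : ℕ}, q.Prime → Nat.Coprime x y → q ∣ x → (y : ZMod q) ≠ 0 := by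
        intro q x y hq hxy hx
        rw [Ne, ZMod.natCast_eq_zero_iff]
        exact cop_excl hxy hq hx
      have nz2 : ∀ {q x : ℕ}, q.Prime → Odd x → q ∣ x → (2 : ZMod q) ≠ 0 := by
        intro q x hq hx h
        haveI : Fact q.Prime := ⟨hq⟩
        exact two_ne_zero_zmod q (odd2 hx h)
      have R := recip_main a b c e oa ob oc oe hab hac hae hbc hbe hce
        (jacobiSym_eq_one_of_squares _ _ fun q hq h => ⟨by
          haveI : Fact q.Prime := ⟨hq⟩
          push_cast
          simp [nzc hq hab h, nzc hq hae h], (Ha q hq h).1⟩)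
        (jacobiSym_eq_one_of_squares _ _ fun q hq h => ⟨by
          haveI : Fact q.Prime := ⟨hq⟩
          push_cast
          simp [nzc hq hac h, nzc hq hae h], (Ha q hq h).2⟩)
        (jacobiSym_eq_one_of_squares _ _ fun q hq h => ⟨by
          haveI : Fact q.Prime := ⟨hq⟩
          push_cast
          simp [nzc hq hab.symm h, nzc hq hbe h], (Hb q hq h).1⟩)
        (jacobiSym_eq_one_of_squares _ _ fun q hq h => ⟨by
          haveI : Fact q.Prime := ⟨hq⟩
          push_cast
          simp [nzc hq hab.symm h, nzc hq hbc h, nz2 hq ob h], (Hb q hq h).2⟩)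
        (jacobiSym_eq_one_of_squares _ _ fun q hq h => ⟨by
          haveI : Fact q.Prime := ⟨hq⟩
          push_cast
          simp [nzc hq hac.symm h, nzc hq hce h], (Hc q hq h).1⟩)
        (jacobiSym_eq_one_of_squares _ _ fun q hq h => ⟨by
          haveI : Fact q.Prime := ⟨hq⟩
          push_cast
          simp [nzc hq hac.symm h, nzc hq hbc.symm h, nz2 hq oc h], (Hc q hq h).2⟩)
        (jacobiSym_eq_one_of_squares _ _ fun q hq h => ⟨by
          haveI : Fact q.Prime := ⟨hq⟩
          push_cast
          simp [nzc hq hae.symm h, nzc hq hbe.symm h], (He q hq h).1⟩)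
        (jacobiSym_eq_one_of_squares _ _ fun q hq h => ⟨by
          haveI : Fact q.Prime := ⟨hq⟩
          push_cast
          simp [nzc hq hae.symm h, nzc hq hce.symm h], (He q hq h).2⟩)
      exact LSol_two a b c e (Nat.odd_iff.mp oa) (Nat.odd_iff.mp ob) (Nat.odd_iff.mp oc)
        (Nat.odd_iff.mp oe) R.1 R.2
    by_cases ga : q ∣ a
    · exact bwd_a q hq2 a b c e (cop_excl hab hq ga) (cop_excl hac hq ga) (cop_excl hae hq ga)
        (Ha q hq ga).1 (Ha q hq ga).2
    by_cases gb : q ∣ b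
    · exact bwd_b q hq2 a b c e ga (cop_excl hbc hq gb) (cop_excl hbe hq gb)
        (Hb q hq gb).1 (Hb q hq gb).2
    by_cases gc : q ∣ c
    · exact bwd_c q hq2 a b c e ga gb (cop_excl hce hq gc) (Hc q hq gc).1 (Hc q hq gc).2
    by_cases ge : q ∣ e
    · exact bwd_e q hq2 a b c e ga gb gc (He q hq ge).1 (He q hq ge).2
    exact LSol_good q hq2 a b c e ga gb gc ge

/-- Uniqueness of the squarefree part. -/
lemma sqfree_part_unique (x y s r : ℕ) (hx : Squarefree x) (hy : Squarefree y) (hs : s ≠ 0)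
    (hr : r ≠ 0) (h : x * s ^ 2 = y * r ^ 2) : x = y := by
  apply Nat.eq_of_factorization_eq hx.ne_zero hy.ne_zero
  intro q
  have h1 := congrArg (fun m => m.factorization q) h
  simp only [Nat.factorization_mul hx.ne_zero (pow_ne_zero 2 hs),
    Nat.factorization_mul hy.ne_zero (pow_ne_zero 2 hr), Nat.factorization_pow, Finsupp.add_apply,
    Finsupp.smul_apply, smul_eq_mul] at h1
  have h2 := hx.natFactorization_le_one q
  have h3 := hy.natFactorization_le_one q
  omega

/-- for positive divisors `d₁, d₂` of the odd squarefree `n = p₁⋯p_k` and `d₃` the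
squarefree part of `d₁·d₂`, the system `H₁, H₂, H₃` is locally solvable everywhere iff
`M_n·x = 0`, where `x = (v_{p₁}(d₁), …, v_{p_k}(d₁), v_{p₁}(d₂), …, v_{p_k}(d₂))`. -/
theorem stmt_2 (k : ℕ) (p : Fin k → ℕ) (hp : ∀ i, (p i).Prime)
    (hinj : Function.Injective p)
    (n : ℕ) (hn : n = ∏ i, p i) (hnodd : Odd n)
    (d₁ d₂ : ℕ) (hd₁ : d₁ ∣ n) (hd₂ : d₂ ∣ n) (hd₁pos : 0 < d₁) (hd₂pos : 0 < d₂)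
    (d₃ : ℕ) (hd₃sf : Squarefree d₃) (hd₃ : ∃ s : ℕ, 0 < s ∧ d₁ * d₂ = d₃ * s ^ 2) :
    ((∃ t u₁ u₂ u₃ : ℝ, ¬(t = 0 ∧ u₁ = 0 ∧ u₂ = 0 ∧ u₃ = 0) ∧
        -(n : ℝ) * t ^ 2 + (d₂ : ℝ) * u₂ ^ 2 - (d₃ : ℝ) * u₃ ^ 2 = 0 ∧
        -(n : ℝ) * t ^ 2 + (d₃ : ℝ) * u₃ ^ 2 - (d₁ : ℝ) * u₁ ^ 2 = 0 ∧
        2 * (n : ℝ) * t ^ 2 + (d₁ : ℝ) * u₁ ^ 2 - (d₂ : ℝ) * u₂ ^ 2 = 0) ∧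
      (∀ (q : ℕ) [Fact q.Prime], ∃ t u₁ u₂ u₃ : ℚ_[q],
        ¬(t = 0 ∧ u₁ = 0 ∧ u₂ = 0 ∧ u₃ = 0) ∧
        -(n : ℚ_[q]) * t ^ 2 + (d₂ : ℚ_[q]) * u₂ ^ 2 - (d₃ : ℚ_[q]) * u₃ ^ 2 = 0 ∧
        -(n : ℚ_[q]) * t ^ 2 + (d₃ : ℚ_[q]) * u₃ ^ 2 - (d₁ : ℚ_[q]) * u₁ ^ 2 = 0 ∧
        2 * (n : ℚ_[q]) * t ^ 2 + (d₁ : ℚ_[q]) * u₁ ^ 2 - (d₂ : ℚ_[q]) * u₂ ^ 2 = 0)) ↔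
    (monskyM k p).mulVec
      (Sum.elim (fun i => (padicValNat (p i) d₁ : ZMod 2))
        (fun i => (padicValNat (p i) d₂ : ZMod 2))) = 0 := by
  have hsq : Squarefree n := hn ▸ squarefree_prod_primes k p hp hinj Finset.univ
  obtain ⟨e, b, c, he, hcop, rfl, rfl⟩ : ∃ e b c : ℕ, 0 < e ∧ Nat.Coprime b c ∧ d₁ = b * e ∧
      d₂ = c * e := by
    obtain ⟨g, b, c, hg, h1, h2, h3⟩ := Nat.exists_coprime' (m := d₁) (n := d₂)
      (Nat.gcd_pos_of_pos_left _ hd₁pos)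
    exact ⟨g, b, c, hg, h1, h2, h3⟩
  have hs1 := hsq.squarefree_of_dvd hd₁
  have hs2 := hsq.squarefree_of_dvd hd₂
  have hbe := Nat.coprime_of_squarefree_mul hs1
  have hce := Nat.coprime_of_squarefree_mul hs2
  obtain ⟨a, ha⟩ : b * c * e ∣ n := by
    apply Nat.Coprime.mul_dvd_of_dvd_of_dvd (Nat.Coprime.mul_left hbe hce)
    · exact hcop.mul_dvd_of_dvd_of_dvd ((Dvd.intro _ rfl).trans hd₁) ((Dvd.intro _ rfl).trans hd₂)
    · exact (Dvd.intro_left _ rfl).trans hd₁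
  have ha' : n = a * b * c * e := by rw [ha]; ring
  have hb0 : b ≠ 0 := (Nat.pos_of_mul_pos_right hd₁pos).ne'
  have hc0 : c ≠ 0 := (Nat.pos_of_mul_pos_right hd₂pos).ne'
  obtain ⟨s, hs, hd⟩ := hd₃
  have hd₃ : d₃ = b * c := by
    refine sqfree_part_unique d₃ (b * c) s e hd₃sf ?_ hs.ne' he.ne' ?_
    · exact hsq.squarefree_of_dvd ⟨a * e, by rw [ha]; ring⟩
    · rw [← hd]; ring
  subst hd₃
  subst ha'
  rw [monsky_iff k p hp hinj a b c e hn, ← core k p hp hinj a b c e hn hnodd,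
    LSol_iff ℝ a b c e hb0 hc0 he.ne']
  apply and_congr_right
  intro _
  constructor
  · intro H q hq
    exact (LSol_iff ℚ_[q] a b c e hb0 hc0 he.ne').mp (H q)
  · intro H q hq
    exact (LSol_iff ℚ_[q] a b c e hb0 hc0 he.ne').mpr (H q)
end

section
/- Let K be an imaginary quadratic field with fundamental discriminant D whose distinct prime divisors are p1, …, pt (ordered so that p_t = 2 if 2 | D), and let R be the Rédei matrix of K. Then the map sending d to X_d = (v_{p1}(d), …, v_{pt}(d))^T is a group isomorphism from D(K) ∩ N(K^×) (with operation ⊙) onto {X ∈ F_2^t : R·X = 0}, with inverse (x1, …, xt)^T ↦ Π p_i^{x_i}. -/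
open NumberField

/-- The group operation on positive squarefree divisors: `d₁ ⊙ d₂ = d₁·d₂/gcd(d₁,d₂)²`. -/
def dOdot (d₁ d₂ : ℕ) : ℕ := d₁ * d₂ / Nat.gcd d₁ d₂ ^ 2

/-- The Rédei matrix of a quadratic field with discriminant `D` and prime divisors
`p₁, …, p_t` of `D`: the `(t−1) × t` matrix over `F₂` with `r_{ii} = [(D/p_i^*)/p_i]` and
`r_{ij} = [p_j/p_i]` for `i ≠ j`, where `p_i^* = (−1)^{(p_i−1)/2}·p_i`. -/
noncomputable def redeiMatrix (D : ℤ) (t : ℕ) (p : Fin t → ℕ) :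
    Matrix (Fin (t - 1)) (Fin t) (ZMod 2) :=
  Matrix.of fun i j =>
    let i' : Fin t := i.castLE (Nat.sub_le t 1)
    if (i' : ℕ) = (j : ℕ) then
      aLeg (D / ((-1) ^ ((p i' - 1) / 2) * (p i' : ℤ))) (p i')
    else aLeg (p j) (p i')



lemma rd_pigeon (a b c : ℕ) (ha : 0 < a) (hb : 0 < b) (hc : 0 < c) 
    (u v w : ℤ) : ∃ x y z : ℤ, (x ≠ 0 ∨ y ≠ 0 ∨ z ≠ 0) ∧ x ^ 2 ≤ b * c ∧ y ^ 2 ≤ a * c ∧ z ^ 2 ≤ a * b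
      ∧ (a : ℤ) ∣ b * y - u * z ∧ (b : ℤ) ∣ a * x - v * z ∧ (c : ℤ) ∣ a * x - w * y := by
  have : NeZero a := ⟨ha.ne'⟩
  have : NeZero b := ⟨hb.ne'⟩
  have : NeZero c := ⟨hc.ne'⟩
  let f : Fin (Nat.sqrt (b*c) + 1) × Fin (Nat.sqrt (a*c) + 1) × Fin (Nat.sqrt (a*b) + 1) →
      ZMod a × ZMod b × ZMod c := fun q =>
    (((b * (q.2.1 : ℕ) - u * (q.2.2 : ℕ) : ℤ) : ZMod a),
     ((a * (q.1 : ℕ) - v * (q.2.2 : ℕ) : ℤ) : ZMod b),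
     ((a * (q.1 : ℕ) - w * (q.2.1 : ℕ) : ℤ) : ZMod c))
  have hcard : Fintype.card (ZMod a × ZMod b × ZMod c) <
      Fintype.card (Fin (Nat.sqrt (b*c) + 1) × Fin (Nat.sqrt (a*c) + 1) × Fin (Nat.sqrt (a*b) + 1)) := by
    simp only [Fintype.card_prod, ZMod.card, Fintype.card_fin]
    have h1 := Nat.lt_succ_sqrt (b*c)
    have h2 := Nat.lt_succ_sqrt (a*c)
    have h3 := Nat.lt_succ_sqrt (a*b)
    simp only [Nat.succ_eq_add_one] at h1 h2 h3
    set X := Nat.sqrt (b*c) + 1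
    set Y := Nat.sqrt (a*c) + 1
    set Z := Nat.sqrt (a*b) + 1
    have h4 : (b*c)*(a*c) < (X*X)*(Y*Y) := Nat.mul_lt_mul'' h1 h2
    have h5 : ((b*c)*(a*c))*(a*b) < ((X*X)*(Y*Y))*(Z*Z) := Nat.mul_lt_mul'' h4 h3
    by_contra hcon
    push Not at hcon
    have := Nat.mul_le_mul hcon hcon
    nlinarith
  obtain ⟨q, r, hqr, hf⟩ := Fintype.exists_ne_map_eq_of_card_lt f hcard
  have key : ∀ (n : ℕ) (i j : Fin (Nat.sqrt n + 1)), ((i : ℕ) - (j : ℕ) : ℤ) ^ 2 ≤ n := by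
    intro n i j
    have hi := Nat.lt_succ_iff.mp i.2
    have hj := Nat.lt_succ_iff.mp j.2
    have hs := Nat.sqrt_le n
    zify at hi hj hs
    nlinarith [Int.natCast_nonneg (i : ℕ), Int.natCast_nonneg (j : ℕ)]
  simp only [f, Prod.mk.injEq] at hf
  obtain ⟨f1, f2, f3⟩ := hf
  refine ⟨(q.1 : ℕ) - (r.1 : ℕ), (q.2.1 : ℕ) - (r.2.1 : ℕ), (q.2.2 : ℕ) - (r.2.2 : ℕ), ?_,
    by exact_mod_cast key _ _ _, by exact_mod_cast key _ _ _, by exact_mod_cast key _ _ _, ?_, ?_, ?_⟩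
  · by_contra hcon
    push Not at hcon
    obtain ⟨h1, h2, h3⟩ := hcon
    apply hqr
    refine Prod.ext (Fin.ext (by omega)) (Prod.ext (Fin.ext (by omega)) (Fin.ext (by omega)))
  · rw [eq_comm, ZMod.intCast_eq_intCast_iff_dvd_sub] at f1
    convert f1 using 1; ring
  · rw [eq_comm, ZMod.intCast_eq_intCast_iff_dvd_sub] at f2
    convert f2 using 1; ring
  · rw [eq_comm, ZMod.intCast_eq_intCast_iff_dvd_sub] at f3
    convert f3 using 1; ring

lemma rd_sq_dvd {a b c u y z : ℤ} (hab : IsCoprime a b) (hu : a ∣ u ^ 2 - b * c)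
    (h : a ∣ b * y - u * z) : a ∣ b * y ^ 2 - c * z ^ 2 := by
  apply hab.dvd_of_dvd_mul_left
  have : b * (b * y ^ 2 - c * z ^ 2) = (b * y - u * z) * (b * y + u * z) + (u^2 - b*c) * z^2 := by ring
  rw [this]
  exact dvd_add (h.mul_right _) (hu.mul_right _)

lemma rd_legendre (a b c : ℕ) (hsq : Squarefree (a * b)) (ha : 0 < a) (hb : 0 < b) (hc : c = 1 ∨ c = 2)
    (hca : Nat.Coprime c a) (hcb : Nat.Coprime c b)
    (hA : IsSquare ((b * c : ℕ) : ZMod a)) (hB : IsSquare ((a * c : ℕ) : ZMod b)) :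
    ∃ x y z : ℤ, (x ≠ 0 ∨ y ≠ 0 ∨ z ≠ 0) ∧ a * x ^ 2 + b * y ^ 2 = c * z ^ 2 := by
  by_cases hone : a = 1 ∧ b = 1
  · obtain ⟨rfl, rfl⟩ := hone
    rcases hc with rfl | rfl
    · exact ⟨1, 0, 1, by simp, by norm_num⟩
    · exact ⟨1, 1, 1, by simp, by norm_num⟩
  have hnsq : ∀ z : ℤ, z ^ 2 ≠ a * b := by
    intro z hz
    have h1 : z.natAbs * z.natAbs = a * b := by
      have := congrArg Int.natAbs hz
      rw [Int.natAbs_pow, Int.natAbs_mul] at this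
      simpa [sq] using this
    have h2 := hsq z.natAbs (by rw [h1])
    rw [Nat.isUnit_iff] at h2
    rw [h2] at h1
    apply hone
    exact ⟨Nat.eq_one_of_mul_eq_one_right h1.symm, Nat.eq_one_of_mul_eq_one_left h1.symm⟩
  have hc0 : 0 < c := by omega
  have hab : Nat.Coprime a b := Nat.coprime_of_squarefree_mul hsq
  obtain ⟨u, hu⟩ := hA
  obtain ⟨v, hv⟩ := hB
  obtain ⟨u, rfl⟩ := ZMod.intCast_surjective u
  obtain ⟨v, rfl⟩ := ZMod.intCast_surjective v
  have hu' : (a : ℤ) ∣ u ^ 2 - b * c := by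
    rw [← ZMod.intCast_zmod_eq_zero_iff_dvd]; push_cast at hu ⊢; rw [hu]; ring
  have hv' : (b : ℤ) ∣ v ^ 2 - a * c := by
    rw [← ZMod.intCast_zmod_eq_zero_iff_dvd]; push_cast at hv ⊢; rw [hv]; ring
  obtain ⟨x, y, z, hne, hx, hy, hz, h1, h2, h3⟩ := rd_pigeon a b c ha hb hc0 u v 1
  have d1 : (a : ℤ) ∣ b * y ^ 2 - c * z ^ 2 := rd_sq_dvd (Nat.isCoprime_iff_coprime.mpr hab) hu' h1
  have d2 : (b : ℤ) ∣ a * x ^ 2 - c * z ^ 2 := rd_sq_dvd (Nat.isCoprime_iff_coprime.mpr hab.symm) hv' h2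
  have d3 : (c : ℤ) ∣ a * x ^ 2 + b * y ^ 2 := by
    rcases hc with rfl | rfl
    · simp
    · have oa : Odd (a : ℤ) := by exact_mod_cast Nat.coprime_two_left.mp hca
      have ob : Odd (b : ℤ) := by exact_mod_cast Nat.coprime_two_left.mp hcb
      have : Even (a * x - 1 * y) := even_iff_two_dvd.mpr (by exact_mod_cast h3)
      have h : Even (a * x ^ 2 + b * y ^ 2) := by
        have e1 := Int.not_even_iff_odd.mpr oa
        have e2 := Int.not_even_iff_odd.mpr ob
        simp only [one_mul, Int.even_sub, Int.even_mul, Int.even_add, Int.even_pow] at this ⊢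
        tauto
      exact_mod_cast even_iff_two_dvd.mp h
  have D1 : (a : ℤ) ∣ a * x ^ 2 + b * y ^ 2 - c * z ^ 2 := by
    have := dvd_add (Dvd.intro (x^2) rfl : (a:ℤ) ∣ a * x^2) d1
    rwa [← add_sub_assoc] at this
  have D2 : (b : ℤ) ∣ a * x ^ 2 + b * y ^ 2 - c * z ^ 2 := by
    have := dvd_add (Dvd.intro (y^2) rfl : (b:ℤ) ∣ b * y^2) d2
    rwa [← add_sub_assoc, add_comm ((b:ℤ) * y^2)] at this
  have D3 : (c : ℤ) ∣ a * x ^ 2 + b * y ^ 2 - c * z ^ 2 := dvd_sub d3 (Dvd.intro _ rfl)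
  have D4 : ((a * b : ℕ) : ℤ) ∣ a * x ^ 2 + b * y ^ 2 - c * z ^ 2 := by
    push_cast
    exact (Nat.isCoprime_iff_coprime.mpr hab).mul_dvd D1 D2
  have D5 : ((c * (a * b) : ℕ) : ℤ) ∣ a * x ^ 2 + b * y ^ 2 - c * z ^ 2 := by
    rw [Nat.cast_mul]
    exact (Nat.isCoprime_iff_coprime.mpr (Nat.Coprime.mul_right hca hcb)).mul_dvd D3 D4
  obtain ⟨k, hk⟩ := D5
  push_cast at hk
  have pa : (0 : ℤ) < a := by exact_mod_cast ha
  have pb : (0 : ℤ) < b := by exact_mod_cast hb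
  have pc : (0 : ℤ) < c := by exact_mod_cast hc0
  have pabc : (0 : ℤ) < c * (a * b) := by positivity
  have hzlt : z ^ 2 < a * b := lt_of_le_of_ne hz (hnsq z)
  have q1 : (a : ℤ) * x ^ 2 ≤ c * (a * b) := by nlinarith
  have q2 : (b : ℤ) * y ^ 2 ≤ c * (a * b) := by nlinarith
  have q3 : (c : ℤ) * z ^ 2 < c * (a * b) := by nlinarith
  have q4 : (0:ℤ) ≤ a * x ^ 2 := by positivity
  have q5 : (0:ℤ) ≤ b * y ^ 2 := by positivity
  have q6 : (0:ℤ) ≤ c * z ^ 2 := by positivity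
  have k0 : -1 < k := by
    by_contra hh; push Not at hh; nlinarith
  have k1 : k ≤ 2 := by
    by_contra hh; push Not at hh; nlinarith
  have hk3 : k = 0 ∨ k = 1 ∨ k = 2 := by omega
  rcases hk3 with rfl | rfl | rfl
  · exact ⟨x, y, z, hne, by linarith⟩
  · refine ⟨x * z + b * y, y * z - a * x, z ^ 2 + a * b, Or.inr (Or.inr (by positivity)), ?_⟩
    have : (a : ℤ) * x ^ 2 + b * y ^ 2 = c * (z ^ 2 + a * b) := by linarith
    linear_combination (z ^ 2 + a * b : ℤ) * this
  · exfalso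
    have e1 : (a : ℤ) * x ^ 2 = c * (a * b) := by linarith
    have e2 : (b : ℤ) * y ^ 2 = c * (a * b) := by linarith
    have e3 : x ^ 2 = b * c := by
      apply mul_left_cancel₀ pa.ne'; linarith
    have e4 : y ^ 2 = a * c := by
      apply mul_left_cancel₀ pb.ne'; linarith
    have e5 : (x * y) ^ 2 = (a * b) * c ^ 2 := by rw [mul_pow, e3, e4]; ring
    have e6 : (c : ℤ) ∣ x * y := by
      rw [← Int.pow_dvd_pow_iff (two_ne_zero)]; rw [e5]; exact Dvd.intro_left _ rfl
    obtain ⟨s, hs⟩ := e6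
    apply hnsq s
    rw [hs] at e5
    have : (c:ℤ)^2 ≠ 0 := by positivity
    apply mul_left_cancel₀ this; linarith
lemma rd_crt (k : ℕ) (n : ℕ) (hn : Squarefree n)
    (h : ∀ p : ℕ, p.Prime → p ∣ n → IsSquare (k : ZMod p)) : IsSquare (k : ZMod n) := by
  induction n using induction_on_primes with
  | zero => exact absurd rfl hn.ne_zero
  | one => exact ⟨0, Subsingleton.elim _ _⟩
  | prime_mul p n hp ih =>
    have hcop : Nat.Coprime p n := Nat.coprime_of_squarefree_mul hn
    have h1 := h p hp (Dvd.intro _ rfl)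
    have h2 := ih (hn.squarefree_of_dvd (Dvd.intro_left _ rfl))
      (fun q hq hqn => h q hq (hqn.mul_left _))
    let e := ZMod.chineseRemainder hcop
    obtain ⟨r, hr⟩ := h1
    obtain ⟨s, hs⟩ := h2
    refine ⟨e.symm (r, s), ?_⟩
    apply e.injective
    rw [map_mul, e.apply_symm_apply, map_natCast]
    ext
    · simpa using hr
    · simpa using hs

lemma rd_jac (a b : ℕ) (h : ∀ q : ℕ, q.Prime → q ∣ b → IsSquare (a : ZMod q))
    (hab : Nat.Coprime a b) : jacobiSym a b = 1 := by
  unfold jacobiSym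
  apply List.prod_eq_one
  intro x hx
  rw [List.mem_pmap] at hx
  obtain ⟨q, hq, rfl⟩ := hx
  have hqp := Nat.prime_of_mem_primeFactorsList hq
  have hqd := Nat.dvd_of_mem_primeFactorsList hq
  have : Fact q.Prime := ⟨hqp⟩
  have h0 : ((a : ℤ) : ZMod q) ≠ 0 := by
    rw [Int.cast_natCast, Ne, ZMod.natCast_eq_zero_iff]
    intro hqa
    exact hqp.one_lt.ne' (Nat.dvd_one.mp (hab ▸ Nat.dvd_gcd hqa hqd))
  rw [legendreSym.eq_one_iff q h0]
  simpa using h q hqp hqd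

/-- Recover the missing prime by reciprocity. -/
lemma rd_missing (a b : ℕ) (hsq : Squarefree (a * b)) (h3 : (a * b) % 4 = 3) (l : ℕ)
    (hl : l.Prime) (hla : l ∣ a)
    (hA : ∀ q : ℕ, q.Prime → q ∣ a → q ≠ l → IsSquare (b : ZMod q))
    (hB : ∀ q : ℕ, q.Prime → q ∣ b → IsSquare (a : ZMod q)) : IsSquare (b : ZMod l) := by
  have hab : Nat.Coprime a b := Nat.coprime_of_squarefree_mul hsq
  have hodd : Odd (a * b) := by rw [Nat.odd_iff]; omega
  obtain ⟨oa, ob⟩ := Nat.odd_mul.mp hodd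
  have h1 : jacobiSym a b = 1 := rd_jac a b hB hab
  have hrec : jacobiSym a b = jacobiSym b a := by
    rcases Nat.odd_mod_four_iff.mp (Nat.odd_iff.mp oa) with h | h
    · exact jacobiSym.quadratic_reciprocity_one_mod_four h ob
    · rcases Nat.odd_mod_four_iff.mp (Nat.odd_iff.mp ob) with h' | h'
      · exact jacobiSym.quadratic_reciprocity_one_mod_four' oa h'
      · rw [Nat.mul_mod, h, h'] at h3; norm_num at h3
  obtain ⟨a', rfl⟩ := hla
  have hsa : Squarefree (l * a') := hsq.squarefree_of_dvd (Dvd.intro _ rfl)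
  have hla' : Nat.Coprime l a' := Nat.coprime_of_squarefree_mul hsa
  have ha'0 : a' ≠ 0 := by rintro rfl; simp at hsa
  have hc' : Nat.Coprime b a' := (hab.symm).coprime_mul_left_right
  have h2 : jacobiSym b a' = 1 := by
    apply rd_jac _ _ _ hc'
    intro q hq hqa
    apply hA q hq (hqa.mul_left _)
    rintro rfl
    exact hq.one_lt.ne' (Nat.dvd_one.mp (hla' ▸ Nat.dvd_gcd dvd_rfl hqa))
  have : NeZero l := ⟨hl.ne_zero⟩
  have : NeZero a' := ⟨ha'0⟩
  have : Fact l.Prime := ⟨hl⟩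
  rw [h1, jacobiSym.mul_right, h2, mul_one, ← jacobiSym.legendreSym.to_jacobiSym] at hrec
  have hl0 : ((b : ℤ) : ZMod l) ≠ 0 := by
    intro h0
    rw [(legendreSym.eq_zero_iff l b).mpr h0] at hrec
    norm_num at hrec
  have := (legendreSym.eq_one_iff l hl0).mp hrec.symm
  simpa using this

/-- local solvability condition at an odd prime dividing `m`. -/
def rdLoc (m : ℤ) (d p : ℕ) : Prop :=
  (¬ p ∣ d → IsSquare (d : ZMod p)) ∧
  (p ∣ d → IsSquare ((-(m / p) * ((d / p : ℕ) : ℤ) : ℤ) : ZMod p))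

lemma rd_loc_b (a b c p : ℕ) (hp : p.Prime) (hsq : Squarefree (a * b)) (hcb : Nat.Coprime c b)
    (hpb : p ∣ b) (h : rdLoc (-(a * b : ℕ)) (a * c) p) : IsSquare ((a * c : ℕ) : ZMod p) := by
  apply h.1
  intro hd
  have hab : Nat.Coprime a b := Nat.coprime_of_squarefree_mul hsq
  have : Nat.Coprime (a * c) b := Nat.Coprime.mul_left hab hcb
  exact hp.one_lt.ne' (Nat.dvd_one.mp (this ▸ Nat.dvd_gcd hd hpb))

lemma rd_loc_a (a b c p : ℕ) (hp : p.Prime) (hsq : Squarefree (a * b)) 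
    (hpa : p ∣ a) (h : rdLoc (-(a * b : ℕ)) (a * c) p) : IsSquare ((b * c : ℕ) : ZMod p) := by
  have h2 := h.2 (hpa.mul_right _)
  obtain ⟨a', rfl⟩ := hpa
  have hsa : Squarefree (p * a') := hsq.squarefree_of_dvd (Dvd.intro _ rfl)
  have hpa' : Nat.Coprime p a' := Nat.coprime_of_squarefree_mul hsa
  have e1 : (-((p * a' * b : ℕ) : ℤ)) / (p : ℤ) = - (a' * b : ℕ) := by
    have : (-((p * a' * b : ℕ) : ℤ)) = p * (- (a' * b : ℕ)) := by push_cast; ring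
    rw [this, Int.mul_ediv_cancel_left _ (by exact_mod_cast hp.ne_zero)]
  have e2 : p * a' * c / p = a' * c := by
    rw [mul_assoc, Nat.mul_div_cancel_left _ hp.pos]
  rw [e1, e2] at h2
  have : Fact p.Prime := ⟨hp⟩
  have h0 : (a' : ZMod p) ≠ 0 := by
    rw [Ne, ZMod.natCast_eq_zero_iff]
    intro hh
    exact hp.one_lt.ne' (Nat.dvd_one.mp (hpa' ▸ Nat.dvd_gcd dvd_rfl hh))
  obtain ⟨r, hr⟩ := h2
  refine ⟨r / a', ?_⟩
  push_cast at hr ⊢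
  field_simp
  linear_combination hr

lemma rd_suff (a b c : ℕ) (hsq : Squarefree (a * b)) (ha : 0 < a) (hb : 0 < b) (hc : c = 1 ∨ c = 2)
    (hca : Nat.Coprime c a) (hcb : Nat.Coprime c b) (l : ℕ) (hl : l.Prime)
    (hl' : l = 2 ∨ (c = 1 ∧ (a * b) % 4 = 3 ∧ l ∣ a * b))
    (h : ∀ p : ℕ, p.Prime → p ≠ 2 → p ∣ a * b → p ≠ l → rdLoc (-(a * b : ℕ)) (a * c) p) :
    ∃ u v : ℚ, u ^ 2 - ((-(a * b : ℕ) : ℤ) : ℚ) * v ^ 2 = ((a * c : ℕ) : ℚ) := by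
  have two : ∀ k : ZMod 2, IsSquare k := by decide
  have key : (∀ p : ℕ, p.Prime → p ∣ a → IsSquare ((b * c : ℕ) : ZMod p)) ∧
      (∀ p : ℕ, p.Prime → p ∣ b → IsSquare ((a * c : ℕ) : ZMod p)) := by
    have hA : ∀ p : ℕ, p.Prime → p ∣ a → p ≠ l → IsSquare ((b * c : ℕ) : ZMod p) := by
      intro p hp hpa hpl
      by_cases hp2 : p = 2
      · subst hp2; exact two _
      · exact rd_loc_a a b c p hp hsq hpa (h p hp hp2 (hpa.mul_right _) hpl)
    have hB : ∀ p : ℕ, p.Prime → p ∣ b → p ≠ l → IsSquare ((a * c : ℕ) : ZMod p) := by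
      intro p hp hpb hpl
      by_cases hp2 : p = 2
      · subst hp2; exact two _
      · exact rd_loc_b a b c p hp hsq hcb hpb (h p hp hp2 (hpb.mul_left _) hpl)
    rcases hl' with rfl | ⟨rfl, h3, hld⟩
    · constructor
      · intro p hp hpa
        by_cases hp2 : p = 2
        · subst hp2; exact two _
        · exact hA p hp hpa hp2
      · intro p hp hpa
        by_cases hp2 : p = 2
        · subst hp2; exact two _
        · exact hB p hp hpa hp2
    · simp only [mul_one] at hA hB ⊢
      have hab : Nat.Coprime a b := Nat.coprime_of_squarefree_mul hsq
      rcases (Nat.Prime.dvd_mul hl).mp hld with hla | hlb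
      · have hB' : ∀ p : ℕ, p.Prime → p ∣ b → IsSquare (a : ZMod p) := by
          intro p hp hpb
          apply hB p hp hpb
          rintro rfl
          exact hp.one_lt.ne' (Nat.dvd_one.mp (hab ▸ Nat.dvd_gcd hla hpb))
        refine ⟨?_, hB'⟩
        intro p hp hpa
        by_cases hpl : p = l
        · subst hpl
          exact rd_missing a b hsq h3 p hp hla hA hB'
        · exact hA p hp hpa hpl
      · have hA' : ∀ p : ℕ, p.Prime → p ∣ a → IsSquare (b : ZMod p) := by
          intro p hp hpa
          apply hA p hp hpa
          rintro rfl
          exact hp.one_lt.ne' (Nat.dvd_one.mp (hab ▸ Nat.dvd_gcd hpa hlb))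
        refine ⟨hA', ?_⟩
        intro p hp hpa
        by_cases hpl : p = l
        · subst hpl
          exact rd_missing b a (by rwa [mul_comm]) (by rwa [mul_comm]) p hp hlb hB hA'
        · exact hB p hp hpa hpl
  have sa : Squarefree a := hsq.squarefree_of_dvd (Dvd.intro _ rfl)
  have sb : Squarefree b := hsq.squarefree_of_dvd (Dvd.intro_left _ rfl)
  obtain ⟨x, y, z, hne, heq⟩ := rd_legendre a b c hsq ha hb hc hca hcb
    (rd_crt _ _ sa key.1) (rd_crt _ _ sb key.2)
  have pa : (0 : ℤ) < a := by exact_mod_cast ha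
  have pb : (0 : ℤ) < b := by exact_mod_cast hb
  have hz : z ≠ 0 := by
    rintro rfl
    have q4 : (0:ℤ) ≤ a * x ^ 2 := by positivity
    have q5 : (0:ℤ) ≤ b * y ^ 2 := by positivity
    have e1 : (a : ℤ) * x ^ 2 = 0 := by nlinarith
    have e2 : (b : ℤ) * y ^ 2 = 0 := by nlinarith
    simp [ha.ne'] at e1
    simp [hb.ne'] at e2
    simp [e1, e2] at hne
  have hzq : (z : ℚ) ≠ 0 := by exact_mod_cast hz
  refine ⟨a * x / z, y / z, ?_⟩
  have hq : (a : ℚ) * x ^ 2 + b * y ^ 2 = c * z ^ 2 := by exact_mod_cast heq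
  push_cast
  field_simp
  linear_combination hq

lemma rd_nec_int (m : ℤ) (hm : Squarefree m) (d p : ℕ) (hd : Squarefree d) (hp : p.Prime)
    (hpm : (p : ℤ) ∣ m) (X Y Z : ℤ) (hZ : Z ≠ 0) (h : X ^ 2 - m * Y ^ 2 = d * Z ^ 2) :
    rdLoc m d p := by
  -- reduce to the coprime situation by strong induction on |Z|
  induction hn : Z.natAbs using Nat.strong_induction_on generalizing X Y Z with
  | _ n ih =>
  have hP : Prime (p : ℤ) := Nat.prime_iff_prime_int.mp hp
  have : Fact p.Prime := ⟨hp⟩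
  obtain ⟨m', rfl⟩ := hpm
  have hm' : ¬ (p : ℤ) ∣ m' := by
    intro hh
    exact hP.not_isUnit (hm p (mul_dvd_mul_left _ hh))
  have descent : (p : ℤ) ∣ X → (p : ℤ) ∣ Y → (p : ℤ) ∣ Z → rdLoc (p * m') d p := by
    rintro ⟨X', rfl⟩ ⟨Y', rfl⟩ ⟨Z', rfl⟩
    have hZ' : Z' ≠ 0 := by rintro rfl; simp at hZ
    refine ih Z'.natAbs ?_ X' Y' Z' hZ' ?_ rfl
    · rw [← hn, Int.natAbs_mul, Int.natAbs_natCast]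
      have := Int.natAbs_pos.mpr hZ'
      nlinarith [hp.two_le]
    · have : ((p : ℤ)^2) ≠ 0 := by have := hP.ne_zero; positivity
      apply mul_left_cancel₀ this
      linear_combination h
  by_cases hpd : p ∣ d
  · obtain ⟨d', rfl⟩ := hpd
    have hd' : ¬ (p : ℤ) ∣ (d' : ℤ) := by
      intro hh
      have hh : p ∣ d' := by exact_mod_cast hh
      exact hp.not_isUnit (hd p (mul_dvd_mul_left _ hh))
    have hX : (p : ℤ) ∣ X := by
      apply hP.dvd_of_dvd_pow (n := 2)
      refine ⟨m' * Y ^ 2 + d' * Z ^ 2, ?_⟩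
      push_cast at h
      linear_combination h
    obtain ⟨X', rfl⟩ := hX
    have h2 : p * X' ^ 2 - m' * Y ^ 2 = d' * Z ^ 2 := by
      apply mul_left_cancel₀ hP.ne_zero
      push_cast at h
      linear_combination h
    by_cases hpZ : (p : ℤ) ∣ Z
    · have hY : (p : ℤ) ∣ Y := by
        have : (p : ℤ) ∣ m' * Y ^ 2 := by
          have e : m' * Y ^ 2 = p * X' ^ 2 - d' * Z ^ 2 := by linarith
          rw [e]
          exact dvd_sub (Dvd.intro _ rfl) ((hpZ.pow two_ne_zero).mul_left _)
        exact hP.dvd_of_dvd_pow ((hP.dvd_or_dvd this).resolve_left hm')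
      exact descent (Dvd.intro _ rfl) hY hpZ
    · refine ⟨fun hh => absurd (Dvd.intro _ rfl) hh, fun _ => ?_⟩
      rw [Int.mul_ediv_cancel_left _ hP.ne_zero, Nat.mul_div_cancel_left _ hp.pos]
      have hz0 : (Z : ZMod p) ≠ 0 := by
        rwa [Ne, ZMod.intCast_zmod_eq_zero_iff_dvd]
      have h3 := congrArg (Int.cast : ℤ → ZMod p) h2
      push_cast at h3
      rw [ZMod.natCast_self, zero_mul, zero_sub] at h3
      refine ⟨m' * Y / Z, ?_⟩
      push_cast
      field_simp
      linear_combination (m' : ZMod p) * h3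
  · by_cases hpZ : (p : ℤ) ∣ Z
    · have hX : (p : ℤ) ∣ X := by
        apply hP.dvd_of_dvd_pow (n := 2)
        have e : X ^ 2 = p * (m' * Y ^ 2) + d * Z ^ 2 := by linarith
        rw [e]
        exact dvd_add (Dvd.intro _ rfl) ((hpZ.pow two_ne_zero).mul_left _)
      have hY : (p : ℤ) ∣ Y := by
        obtain ⟨X', rfl⟩ := hX
        obtain ⟨Z', rfl⟩ := hpZ
        have : (p : ℤ) ∣ m' * Y ^ 2 := by
          refine ⟨X' ^ 2 - d * Z' ^ 2, ?_⟩
          apply mul_left_cancel₀ hP.ne_zero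
          linear_combination -h
        exact hP.dvd_of_dvd_pow ((hP.dvd_or_dvd this).resolve_left hm')
      exact descent hX hY hpZ
    · refine ⟨fun _ => ?_, fun hh => absurd hh hpd⟩
      have hz0 : (Z : ZMod p) ≠ 0 := by
        rwa [Ne, ZMod.intCast_zmod_eq_zero_iff_dvd]
      have h3 := congrArg (Int.cast : ℤ → ZMod p) h
      push_cast at h3
      rw [ZMod.natCast_self, zero_mul, zero_mul, sub_zero] at h3
      refine ⟨X / Z, ?_⟩
      field_simp
      linear_combination -h3

lemma rd_nec (m : ℤ) (hm : Squarefree m) (d p : ℕ) (hd : Squarefree d) (hp : p.Prime)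
    (hpm : (p : ℤ) ∣ m) (u v : ℚ) (h : u ^ 2 - m * v ^ 2 = d) : rdLoc m d p := by
  have hu : (u.den : ℚ) ≠ 0 := by exact_mod_cast u.den_ne_zero
  have hv : (v.den : ℚ) ≠ 0 := by exact_mod_cast v.den_ne_zero
  refine rd_nec_int m hm d p hd hp hpm (u.num * v.den) (v.num * u.den) (u.den * v.den) 
    (by exact_mod_cast mul_ne_zero u.den_ne_zero v.den_ne_zero) ?_
  have e1 := Rat.num_div_den u
  have e2 := Rat.num_div_den v
  rw [← e1, ← e2] at h
  field_simp at h
  have h' : ((u.num * v.den) ^ 2 - m * (v.num * u.den) ^ 2 : ℚ) = d * (u.den * v.den) ^ 2 := by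
    linear_combination h
  exact_mod_cast h'
lemma rd_basis {K : Type} [Field K] [NumberField K] (hdeg : Module.finrank ℚ K = 2) (α : K)
    (hα : ∀ q : ℚ, algebraMap ℚ K q ≠ α) : ∃ B : Module.Basis (Fin 2) ℚ K, B 0 = 1 ∧ B 1 = α := by
  have hli : LinearIndependent ℚ ![(1 : K), α] := by
    rw [LinearIndependent.pair_iff' one_ne_zero]
    intro q hq
    apply hα q
    rw [← hq, Algebra.algebraMap_eq_smul_one]
  let B := basisOfLinearIndependentOfCardEqFinrank hli (by simp [hdeg])
  exact ⟨B, by simp [B], by simp [B]⟩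

lemma rd_repr {K : Type} [Field K] [NumberField K] (B : Module.Basis (Fin 2) ℚ K) (h0 : B 0 = 1)
    (z : K) : ∃ x y : ℚ, z = (x : K) + (y : K) * B 1 := by
  refine ⟨B.repr z 0, B.repr z 1, ?_⟩
  have := B.sum_repr z
  rw [Fin.sum_univ_two, h0] at this
  conv_lhs => rw [← this]
  simp [Algebra.smul_def]

lemma rd_sqrt (K : Type) [Field K] [NumberField K] (hdeg : Module.finrank ℚ K = 2) :
    ∃ m : ℤ, Squarefree m ∧ ∃ α : K, α ^ 2 = (m : K) ∧ ∀ q : ℚ, algebraMap ℚ K q ≠ α := by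
  have h1 : ∃ β : K, ∀ q : ℚ, algebraMap ℚ K q ≠ β := by
    by_contra hcon
    push Not at hcon
    have hb : Function.Surjective (algebraMap ℚ K) := hcon
    have : (⊥ : Subalgebra ℚ K) = ⊤ := by
      rw [eq_top_iff]
      intro x _
      exact Algebra.mem_bot.mpr (hb x)
    rw [Subalgebra.bot_eq_top_iff_finrank_eq_one, hdeg] at this
    norm_num at this
  obtain ⟨β, hβ⟩ := h1
  obtain ⟨B, hB0, hB1⟩ := rd_basis hdeg β hβ
  obtain ⟨t, s, hts⟩ := rd_repr B hB0 (β ^ 2)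
  rw [hB1] at hts
  -- (2β - s)^2 = 4t + s^2 =: r
  set r : ℚ := 4 * t + s ^ 2 with hr
  have hsq : (2 * β - (s : K)) ^ 2 = (r : K) := by
    rw [hr]; push_cast
    linear_combination 4 * hts
  have hden : (r.den : ℚ) ≠ 0 := by exact_mod_cast r.den_ne_zero
  have hr0 : r ≠ 0 := by
    intro h0
    rw [h0] at hsq
    have : 2 * β - (s : K) = 0 := by simpa using hsq
    apply hβ (s / 2)
    simp
    rw [div_eq_iff two_ne_zero]
    linear_combination -this
  obtain ⟨a, b, hab, hasq⟩ := Nat.sq_mul_squarefree (r.num * r.den).natAbs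
  have hN : (r.num * r.den) ≠ 0 := mul_ne_zero (Rat.num_ne_zero.mpr hr0) (by exact_mod_cast r.den_ne_zero)
  have hb0 : b ≠ 0 := by
    rintro rfl
    have := Int.natAbs_ne_zero.mpr hN
    rw [← hab] at this; simp at this
  have hm : ∃ m : ℤ, Squarefree m ∧ (b : ℤ) ^ 2 * m = r.num * r.den := by
    rcases Int.natAbs_eq (r.num * r.den) with h | h
    · exact ⟨a, Int.squarefree_natCast.mpr hasq, by rw [h, ← hab]; push_cast; ring⟩
    · exact ⟨-a, by rw [← Int.squarefree_natAbs]; simpa using hasq, by rw [h, ← hab]; push_cast; ring⟩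
  obtain ⟨m, hms, hm⟩ := hm
  have hbK : (b : K) ≠ 0 := by exact_mod_cast hb0
  have hmr : (b : ℚ) ^ 2 * m = r * r.den ^ 2 := by
    have h2 : (b : ℚ) ^ 2 * m = r.num * r.den := by exact_mod_cast hm
    rw [h2]
    have := Rat.num_div_den r
    field_simp at this
    nth_rewrite 3 [← Rat.num_div_den r]
    field_simp
  refine ⟨m, hms, (2 * β - (s : K)) * r.den / b, ?_, ?_⟩
  · rw [div_pow, mul_pow, hsq]
    have : (b : K) ^ 2 * m = r * r.den ^ 2 := by exact_mod_cast congrArg (Rat.cast : ℚ → K) hmr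
    rw [← this]
    field_simp
  · intro q hq
    apply hβ ((q * b / r.den + s) / 2)
    have hdK : (r.den : K) ≠ 0 := by exact_mod_cast r.den_ne_zero
    rw [eq_ratCast] at hq ⊢
    push_cast
    rw [hq]
    field_simp
    ring

lemma rd_trace_norm {K : Type} [Field K] [NumberField K] (B : Module.Basis (Fin 2) ℚ K)
    (h0 : B 0 = 1) (m : ℤ) (h1 : B 1 ^ 2 = (m : K)) (x y : ℚ) :
    Algebra.trace ℚ K ((x : K) + (y : K) * B 1) = 2 * x ∧
    Algebra.norm ℚ ((x : K) + (y : K) * B 1) = x ^ 2 - m * y ^ 2 := by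
  have hM : Algebra.leftMulMatrix B ((x : K) + (y : K) * B 1) = !![x, m * y; y, x] := by
    have e0 : ((x : K) + (y : K) * B 1) * B 0 = x • B 0 + y • B 1 := by
      rw [h0]; simp [Algebra.smul_def]
    have e1 : ((x : K) + (y : K) * B 1) * B 1 = (m * y) • B 0 + x • B 1 := by
      rw [h0]; simp only [Algebra.smul_def, eq_ratCast]; push_cast
      linear_combination (y : K) * h1
    ext i j
    rw [Algebra.leftMulMatrix_eq_repr_mul]
    fin_cases j
    · simp only [Fin.zero_eta, e0]
      fin_cases i <;> simp
    · simp only [Fin.mk_one, e1]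
      fin_cases i <;> simp
  rw [Algebra.trace_eq_matrix_trace B, Algebra.norm_eq_matrix_det B, hM]
  simp [Matrix.trace_fin_two, Matrix.det_fin_two]
  constructor <;> ring

lemma rd_den (m : ℤ) (hm : Squarefree m) (w : ℚ) (n : ℤ) (h : (m : ℚ) * w ^ 2 = n) :
    ∃ c : ℤ, w = c := by
  have hden : (w.den : ℚ) ≠ 0 := by exact_mod_cast w.den_ne_zero
  have h1 : m * w.num ^ 2 = n * w.den ^ 2 := by
    have : (m : ℚ) * w.num ^ 2 = n * w.den ^ 2 := by
      rw [← Rat.num_div_den w] at h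
      field_simp at h
      linear_combination h
    exact_mod_cast this
  have hcop : IsCoprime ((w.den : ℤ) ^ 2) (w.num ^ 2) := by
    have := w.reduced
    apply IsCoprime.pow
    rw [isCoprime_comm, Int.isCoprime_iff_gcd_eq_one]
    simpa [Int.gcd, Nat.Coprime] using this
  have h2 : (w.den : ℤ) ^ 2 ∣ m := by
    apply hcop.dvd_of_dvd_mul_right
    rw [h1]; exact Dvd.intro_left _ rfl
  have h3 := hm (w.den : ℤ) (by rwa [← sq])
  have h4 : w.den = 1 := by
    rw [Int.isUnit_iff] at h3; have := w.den_pos; omega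
  exact ⟨w.num, by rw [← Rat.num_div_den w]; simp [h4]⟩

lemma rd_int {K : Type} [Field K] [NumberField K] (B : Module.Basis (Fin 2) ℚ K)
    (h0 : B 0 = 1) (m : ℤ) (hm : Squarefree m) (h1 : B 1 ^ 2 = (m : K)) (z : K) (hz : IsIntegral ℤ z) :
    ∃ a c : ℤ, z = ((a / 2 : ℚ) : K) + ((c / 2 : ℚ) : K) * B 1 ∧ 4 ∣ a ^ 2 - m * c ^ 2 := by
  obtain ⟨x, y, rfl⟩ := rd_repr B h0 z
  obtain ⟨ht, hn⟩ := rd_trace_norm B h0 m h1 x y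
  have it := Algebra.isIntegral_trace (L := ℚ) hz
  have iN := Algebra.isIntegral_norm ℚ hz
  rw [ht] at it
  rw [hn] at iN
  obtain ⟨a, ha⟩ := IsIntegrallyClosed.isIntegral_iff.mp it
  obtain ⟨N, hN⟩ := IsIntegrallyClosed.isIntegral_iff.mp iN
  simp only [eq_intCast] at ha hN
  obtain ⟨c, hc⟩ := rd_den m hm (2 * y) (a ^ 2 - 4 * N) (by
    push_cast; rw [ha, hN]; ring)
  refine ⟨a, c, ?_, N, ?_⟩
  · rw [ha, ← hc]; simp
  · have : (a : ℚ) ^ 2 - m * c ^ 2 = 4 * N := by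
      rw [ha, ← hc, hN]; ring
    exact_mod_cast this

lemma rd_parity1 (m a c : ℤ) (hm : m % 4 = 1) (h : 4 ∣ a ^ 2 - m * c ^ 2) : 2 ∣ a - c := by
  rcases Int.even_or_odd' a with ⟨k, rfl | rfl⟩ <;> rcases Int.even_or_odd' c with ⟨l, rfl | rfl⟩
  · omega
  · exfalso; obtain ⟨q, rfl⟩ : ∃ q, m = 4 * q + 1 := ⟨m / 4, by omega⟩
    ring_nf at h; omega
  · exfalso; obtain ⟨q, rfl⟩ : ∃ q, m = 4 * q + 1 := ⟨m / 4, by omega⟩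
    ring_nf at h; omega
  · omega

lemma rd_parity2 (m a c : ℤ) (hm : m % 4 = 2 ∨ m % 4 = 3) (h : 4 ∣ a ^ 2 - m * c ^ 2) :
    2 ∣ a ∧ 2 ∣ c := by
  obtain ⟨q, r, hr, rfl⟩ : ∃ q r, (r = 2 ∨ r = 3) ∧ m = 4 * q + r := ⟨m / 4, m % 4, hm, by omega⟩
  rcases Int.even_or_odd' a with ⟨k, rfl | rfl⟩ <;> rcases Int.even_or_odd' c with ⟨l, rfl | rfl⟩ <;>
    rcases hr with rfl | rfl
  all_goals first
    | exact ⟨Dvd.intro _ rfl, Dvd.intro _ rfl⟩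
    | (exfalso; ring_nf at h; omega)

lemma rd_discr {K : Type} [Field K] [NumberField K] (B : Module.Basis (Fin 2) ℚ K)
    (h0 : B 0 = 1) (m : ℤ) (h1 : B 1 ^ 2 = (m : K)) (x y : ℚ) (hy : y ≠ 0)
    (hi : IsIntegral ℤ ((x : K) + (y : K) * B 1))
    (hspan : ∀ z : K, IsIntegral ℤ z → ∃ k l : ℤ, z = k + l * ((x : K) + (y : K) * B 1)) :
    (discr K : ℚ) = 4 * m * y ^ 2 := by
  obtain ⟨ω, e⟩ : ∃ ω : 𝓞 K, algebraMap (𝓞 K) K ω = (x : K) + (y : K) * B 1 :=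
    ⟨⟨(x : K) + (y : K) * B 1, hi⟩, rfl⟩
  have hli : LinearIndependent ℤ ![(1 : 𝓞 K), ω] := by
    rw [LinearIndependent.pair_iff]
    intro s t hst
    have h := congrArg (algebraMap (𝓞 K) K) hst
    have h' : ((s + t * x : ℚ)) • B 0 + (t * y : ℚ) • B 1 = 0 := by
      rw [h0]
      simp only [map_add, map_zero, zsmul_eq_mul, map_mul, map_intCast, map_one] at h
      rw [e] at h
      simp only [Algebra.smul_def, eq_ratCast]
      push_cast
      linear_combination h
    have hB : LinearIndependent ℚ ![B 0, B 1] := by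
      have := B.linearIndependent
      convert this using 1
      ext i; fin_cases i <;> rfl
    obtain ⟨e1, e2⟩ := LinearIndependent.pair_iff.mp hB _ _ h'
    have ht : t = 0 := by
      rcases mul_eq_zero.mp e2 with h | h
      · exact_mod_cast h
      · exact absurd h hy
    refine ⟨?_, ht⟩
    rw [ht] at e1
    simpa using e1
  have hsp : ⊤ ≤ Submodule.span ℤ (Set.range ![(1 : 𝓞 K), ω]) := by
    intro z _
    obtain ⟨k, l, hkl⟩ := hspan z z.isIntegral_coe
    have : z = k • (1 : 𝓞 K) + l • ω := by
      apply RingOfIntegers.ext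
      rw [hkl]
      simp [zsmul_eq_mul, e]
    rw [this]
    apply Submodule.add_mem
    · exact Submodule.smul_mem _ _ (Submodule.subset_span ⟨0, rfl⟩)
    · exact Submodule.smul_mem _ _ (Submodule.subset_span ⟨1, rfl⟩)
  let b := Module.Basis.mk hli hsp
  have hb0 : b 0 = 1 := by simp [b]
  have hb1 : b 1 = ω := by simp [b]
  rw [← discr_eq_discr K b, Algebra.discr_def, Matrix.det_fin_two]
  simp only [Algebra.traceMatrix_apply, Algebra.traceForm_apply]
  push_cast
  have ct : ∀ z : 𝓞 K, ((Algebra.trace ℤ (𝓞 K) z : ℤ) : ℚ) = Algebra.trace ℚ K z :=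
    fun z => Algebra.coe_trace_int z
  simp only [ct, hb0, hb1]
  have t0 : Algebra.trace ℚ K (((1 * 1 : 𝓞 K) : 𝓞 K) : K) = 2 := by
    have := (rd_trace_norm B h0 m h1 1 0).1
    simpa using this
  have t1 : Algebra.trace ℚ K (((1 * ω : 𝓞 K) : 𝓞 K) : K) = 2 * x := by
    have := (rd_trace_norm B h0 m h1 x y).1
    rw [← this, ← e]
    simp
  have t2 : Algebra.trace ℚ K (((ω * 1 : 𝓞 K) : 𝓞 K) : K) = 2 * x := by
    have := (rd_trace_norm B h0 m h1 x y).1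
    rw [← this, ← e]
    simp
  have t3 : Algebra.trace ℚ K (((ω * ω : 𝓞 K) : 𝓞 K) : K) = 2 * (x ^ 2 + m * y ^ 2) := by
    rw [← (rd_trace_norm B h0 m h1 (x ^ 2 + m * y ^ 2) (2 * x * y)).1]
    congr 1
    simp only [map_mul]
    rw [e]
    push_cast
    linear_combination (y : K) ^ 2 * h1
  rw [t0, t1, t2, t3]
  ring

lemma rd_field (K : Type) [Field K] [NumberField K] (hdeg : Module.finrank ℚ K = 2)
    (him : ∀ v : InfinitePlace K, v.IsComplex) :
    ∃ m : ℤ, Squarefree m ∧ m < 0 ∧ ((m % 4 = 1 ∧ discr K = m) ∨ ((m % 4 = 2 ∨ m % 4 = 3) ∧ discr K = 4 * m)) ∧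
      ∀ d : ℚ, d ≠ 0 → ((∃ x : K, x ≠ 0 ∧ Algebra.norm ℚ x = d) ↔ ∃ u v : ℚ, u ^ 2 - m * v ^ 2 = d) := by
  obtain ⟨m, hm, α, hα, hnq⟩ := rd_sqrt K hdeg
  obtain ⟨B, h0, h1⟩ := rd_basis hdeg α hnq
  have h1' : B 1 ^ 2 = (m : K) := by rw [h1, hα]
  have hαi : IsIntegral ℤ (B 1) := by
    apply IsIntegral.of_pow (n := 2) (by norm_num)
    rw [h1']
    exact isIntegral_algebraMap (x := m)
  have hm4 : m % 4 = 1 ∨ m % 4 = 2 ∨ m % 4 = 3 := by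
    have : m % 4 ≠ 0 := by
      intro h
      have := hm 2 (by omega)
      rw [Int.isUnit_iff] at this; omega
    omega
  have hcase : (m % 4 = 1 ∧ discr K = m) ∨ ((m % 4 = 2 ∨ m % 4 = 3) ∧ discr K = 4 * m) := by
    rcases hm4 with h | h
    · left
      refine ⟨h, ?_⟩
      have := rd_discr B h0 m h1' (1/2) (1/2) (by norm_num) ?_ ?_
      · have h2 : (discr K : ℚ) = m := by rw [this]; ring
        exact_mod_cast h2
      · obtain ⟨q, hq⟩ : ∃ q, m = 4 * q + 1 := ⟨m / 4, by omega⟩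
        refine ⟨Polynomial.X ^ 2 - Polynomial.X - Polynomial.C q, by monicity!, ?_⟩
        simp only [Polynomial.eval₂_sub, Polynomial.eval₂_pow, Polynomial.eval₂_X, Polynomial.eval₂_C]
        have : (m : K) = 4 * q + 1 := by exact_mod_cast congrArg (Int.cast : ℤ → K) hq
        rw [this] at h1'
        push_cast
        simp only [eq_intCast]
        linear_combination (1/4 : K) * h1'
      · intro z hz
        obtain ⟨a, c, rfl, hac⟩ := rd_int B h0 m hm h1' z hz
        obtain ⟨k, hk⟩ := rd_parity1 m a c h hac
        refine ⟨k, c, ?_⟩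
        have : a = 2 * k + c := by linarith
        rw [this]; push_cast; ring
    · right
      refine ⟨h, ?_⟩
      have := rd_discr B h0 m h1' 0 1 (by norm_num) (by simpa using hαi) ?_
      · have h2 : (discr K : ℚ) = 4 * m := by rw [this]; ring
        exact_mod_cast h2
      · intro z hz
        obtain ⟨a, c, rfl, hac⟩ := rd_int B h0 m hm h1' z hz
        obtain ⟨⟨k, rfl⟩, ⟨l, rfl⟩⟩ := rd_parity2 m a c h hac
        refine ⟨k, l, ?_⟩
        push_cast; ring
  refine ⟨m, hm, ?_, hcase, ?_⟩
  · have hc : InfinitePlace.nrComplexPlaces K = 1 := by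
      have h2 := InfinitePlace.card_add_two_mul_card_eq_rank K
      have h3 : InfinitePlace.nrRealPlaces K = 0 := by
        classical
        unfold InfinitePlace.nrRealPlaces
        have : IsEmpty {w : InfinitePlace K // w.IsReal} :=
          ⟨fun v => (InfinitePlace.not_isReal_iff_isComplex.mpr (him v.1)) v.2⟩
        simp
      omega
    have hs := sign_discr K
    rw [hc, pow_one] at hs
    have : discr K < 0 := Int.sign_eq_neg_one_iff_neg.mp hs
    omega
  · intro d hd
    constructor
    · rintro ⟨x, _, hx⟩
      obtain ⟨u, v, rfl⟩ := rd_repr B h0 x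
      exact ⟨u, v, by rw [← hx, (rd_trace_norm B h0 m h1' u v).2]⟩
    · rintro ⟨u, v, huv⟩
      refine ⟨u + v * B 1, ?_, by rw [(rd_trace_norm B h0 m h1' u v).2, huv]⟩
      intro hz
      have := (rd_trace_norm B h0 m h1' u v).2
      rw [hz, huv] at this
      apply hd
      rw [← this]
      rw [Algebra.norm_eq_zero_iff]
lemma rd_aLeg_eq_zero (a : ℤ) (p : ℕ) : aLeg a p = 0 ↔ IsSquare (a : ZMod p) := by
  unfold aLeg
  split_ifs with h <;> simp [h]

lemma rd_isSquare_mul (p : ℕ) [Fact p.Prime] (hp2 : p ≠ 2) (a b : ZMod p) (ha : a ≠ 0) (hb : b ≠ 0) :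
    IsSquare (a * b) ↔ (IsSquare a ↔ IsSquare b) := by
  have hF : ringChar (ZMod p) ≠ 2 := by rwa [ZMod.ringChar_zmod_n]
  rw [← quadraticChar_one_iff_isSquare ha, ← quadraticChar_one_iff_isSquare hb,
    ← quadraticChar_one_iff_isSquare (mul_ne_zero ha hb), map_mul]
  rcases quadraticChar_dichotomy ha with h | h <;> rcases quadraticChar_dichotomy hb with h' | h' <;>
    rw [h, h'] <;> norm_num

lemma rd_aLeg_mul (p : ℕ) [Fact p.Prime] (hp2 : p ≠ 2) (a b : ℤ) (ha : (a : ZMod p) ≠ 0)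
    (hb : (b : ZMod p) ≠ 0) : aLeg (a * b) p = aLeg a p + aLeg b p := by
  have := rd_isSquare_mul p hp2 _ _ ha hb
  unfold aLeg
  push_cast
  simp only [this]
  by_cases h1 : IsSquare (a : ZMod p) <;> by_cases h2 : IsSquare (b : ZMod p) <;> simp [h1, h2]
  decide

lemma rd_aLeg_prod {ι : Type} (s : Finset ι) (q : ι → ℕ) (X : ι → ZMod 2) (p : ℕ) [Fact p.Prime]
    (hp2 : p ≠ 2) (hq : ∀ j ∈ s, (q j : ZMod p) ≠ 0) :
    aLeg ((∏ j ∈ s, q j ^ (X j).val : ℕ) : ℤ) p = ∑ j ∈ s, aLeg (q j) p * X j := by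
  classical
  induction s using Finset.induction_on with
  | empty => simp [aLeg]
  | insert j s hj ih =>
    rw [Finset.prod_insert hj, Finset.sum_insert hj, Nat.cast_mul, rd_aLeg_mul p hp2,
      ih (fun k hk => hq k (Finset.mem_insert_of_mem hk))]
    · congr 1
      have : X j = 0 ∨ X j = 1 := by generalize X j = x; revert x; decide
      rcases this with h | h
      · rw [h]; simp [aLeg]
      · rw [h]; simp [ZMod.val_one]
    · push_cast
      exact pow_ne_zero _ (hq j (Finset.mem_insert_self _ _))
    · push_cast
      exact Finset.prod_ne_zero_iff.mpr fun k hk => pow_ne_zero _ (hq k (Finset.mem_insert_of_mem hk))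

lemma rd_diag (p : ℕ) [Fact p.Prime] (hp2 : p ≠ 2) (m D : ℤ) (hD : D = m ∨ D = 4 * m)
    (hpm : (p : ℤ) ∣ m) (h0 : ((m / p : ℤ) : ZMod p) ≠ 0) :
    aLeg (D / ((-1) ^ ((p - 1) / 2) * (p : ℤ))) p = aLeg (-(m / p)) p := by
  have hp : p.Prime := Fact.out
  have hp0 : (p : ℤ) ≠ 0 := by exact_mod_cast hp.ne_zero
  obtain ⟨m', rfl⟩ := hpm
  rw [Int.mul_ediv_cancel_left _ hp0] at h0 ⊢
  have h20 : (2 : ZMod p) ≠ 0 := by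
    intro h
    have : ((2 : ℕ) : ZMod p) = 0 := by exact_mod_cast h
    rw [ZMod.natCast_eq_zero_iff] at this
    exact hp2 ((Nat.prime_dvd_prime_iff_eq hp Nat.prime_two).mp this)
  have hn1 : ((-1 : ℤ) : ZMod p) ≠ 0 := by simp
  have h4 : aLeg 4 p = 0 := by
    rw [rd_aLeg_eq_zero]; exact ⟨2, by push_cast; norm_num⟩
  have h40 : ((4 : ℤ) : ZMod p) ≠ 0 := by
    have : ((4 : ℤ) : ZMod p) = 2 * 2 := by push_cast; norm_num
    rw [this]; exact mul_ne_zero h20 h20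
  have hneg : aLeg (-m') p = aLeg (-1) p + aLeg m' p := by
    rw [← rd_aLeg_mul p hp2 _ _ hn1 h0]; congr 1; ring
  have e : ∃ f : ℤ, aLeg f p = aLeg m' p ∧ (f : ZMod p) ≠ 0 ∧ D = p * f := by
    rcases hD with rfl | rfl
    · exact ⟨m', rfl, h0, rfl⟩
    · refine ⟨4 * m', ?_, ?_, by ring⟩
      · rw [rd_aLeg_mul p hp2 _ _ h40 h0, h4, zero_add]
      · push_cast at h40 ⊢; exact mul_ne_zero h40 h0
  obtain ⟨f, hf, hf0, rfl⟩ := e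
  have hodd : p % 2 = 1 := hp.eq_two_or_odd.resolve_left hp2
  rcases Nat.even_or_odd ((p - 1) / 2) with hk | hk
  · rw [hk.neg_one_pow, one_mul, Int.mul_ediv_cancel_left _ hp0, hf, hneg]
    have : aLeg (-1) p = 0 := by
      rw [rd_aLeg_eq_zero]; push_cast
      rw [ZMod.exists_sq_eq_neg_one_iff]
      rw [Nat.even_iff] at hk; omega
    rw [this, zero_add]
  · rw [hk.neg_one_pow]
    have : (p : ℤ) * f = (-1 * p) * (-f) := by ring
    rw [this, Int.mul_ediv_cancel_left _ (by simpa using hp0), hneg, ← hf,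
      ← rd_aLeg_mul p hp2 _ _ hn1 hf0]
    congr 1; ring

lemma rd_row (m D : ℤ) (hm : Squarefree m) (hD : D = m ∨ D = 4 * m) (t : ℕ) (p : Fin t → ℕ)
    (hp : ∀ i, (p i).Prime) (hinj : Function.Injective p) (X : Fin t → ZMod 2)
    (i : Fin (t - 1)) (hp2 : p (i.castLE (Nat.sub_le t 1)) ≠ 2)
    (hpm : (p (i.castLE (Nat.sub_le t 1)) : ℤ) ∣ m) :
    (redeiMatrix D t p).mulVec X i = 0 ↔
      rdLoc m (∏ j, p j ^ (X j).val) (p (i.castLE (Nat.sub_le t 1))) := by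
  set i' : Fin t := i.castLE (Nat.sub_le t 1) with hi'
  have : Fact (p i').Prime := ⟨hp i'⟩
  have hne : ∀ j ∈ Finset.univ.erase i', (p j : ZMod (p i')) ≠ 0 := by
    intro j hj h
    rw [ZMod.natCast_eq_zero_iff, Nat.prime_dvd_prime_iff_eq (hp _) (hp _)] at h
    exact (Finset.ne_of_mem_erase hj) (hinj h).symm
  have hm0 : ((m / (p i') : ℤ) : ZMod (p i')) ≠ 0 := by
    rw [Ne, ZMod.intCast_zmod_eq_zero_iff_dvd]
    intro h
    have hP : Prime (p i' : ℤ) := Nat.prime_iff_prime_int.mp (hp _)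
    apply hP.not_isUnit
    apply hm
    obtain ⟨m', rfl⟩ := hpm
    rw [Int.mul_ediv_cancel_left _ hP.ne_zero] at h
    exact mul_dvd_mul_left _ h
  set P : ℕ := ∏ j ∈ Finset.univ.erase i', p j ^ (X j).val with hPdef
  have hP0 : (P : ZMod (p i')) ≠ 0 := by
    rw [hPdef]; push_cast
    exact Finset.prod_ne_zero_iff.mpr fun k hk => pow_ne_zero _ (hne k hk)
  have hd : ∏ j, p j ^ (X j).val = p i' ^ (X i').val * P :=
    (Finset.mul_prod_erase _ _ (Finset.mem_univ i')).symm
  have hsum : (redeiMatrix D t p).mulVec X i = aLeg (-(m / p i')) (p i') * X i' + aLeg P (p i') := by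
    rw [hPdef, rd_aLeg_prod _ _ _ _ hp2 hne, Matrix.mulVec, dotProduct,
      ← Finset.add_sum_erase _ _ (Finset.mem_univ i')]
    congr 1
    · rw [← rd_diag (p i') hp2 m D hD hpm hm0]
      have hv : (i : ℕ) = (i' : ℕ) := by simp [hi']
      simp [redeiMatrix, ← hi', hv]
    · apply Finset.sum_congr rfl
      intro j hj
      have : ¬ ((i : ℕ) = (j : ℕ)) := by
        intro h
        exact (Finset.ne_of_mem_erase hj) (Fin.ext (by simp [hi', h]))
      simp [redeiMatrix, ← hi', this]
  rw [hsum, hd]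
  have hnd : ¬ p i' ∣ P := by rwa [← ZMod.natCast_eq_zero_iff]
  have : X i' = 0 ∨ X i' = 1 := by generalize X i' = x; revert x; decide
  unfold rdLoc
  rcases this with h | h
  · rw [h]
    simp [hnd, rd_aLeg_eq_zero]
  · rw [h, ZMod.val_one, pow_one, mul_one, ← rd_aLeg_mul _ hp2 _ _ (by push_cast; simpa using hm0)
      (by exact_mod_cast hP0), rd_aLeg_eq_zero, Nat.mul_div_cancel_left _ (hp i').pos]
    simp

lemma rd_val_prod {t : ℕ} (p : Fin t → ℕ) (hp : ∀ i, (p i).Prime) (hinj : Function.Injective p)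
    (X : Fin t → ZMod 2) (i : Fin t) : padicValNat (p i) (∏ j, p j ^ (X j).val) = (X i).val := by
  have : Fact (p i).Prime := ⟨hp i⟩
  rw [← Finset.mul_prod_erase _ _ (Finset.mem_univ i), padicValNat.mul, padicValNat.prime_pow]
  · rw [padicValNat.eq_zero_of_not_dvd, add_zero]
    intro h
    rw [Prime.dvd_finsetProd_iff (hp i).prime] at h
    obtain ⟨j, hj, hd⟩ := h
    have := (Nat.prime_dvd_prime_iff_eq (hp i) (hp j)).mp ((hp i).dvd_of_dvd_pow hd)
    exact (Finset.ne_of_mem_erase hj) (hinj this).symm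
  · exact pow_ne_zero _ (hp i).ne_zero
  · exact Finset.prod_ne_zero_iff.mpr fun j _ => pow_ne_zero _ (hp j).ne_zero

lemma rd_cop {t : ℕ} (p : Fin t → ℕ) (hp : ∀ i, (p i).Prime) (hinj : Function.Injective p) :
    ∀ i j, i ≠ j → Nat.Coprime (p i) (p j) := fun i j hij =>
  (Nat.coprime_primes (hp i) (hp j)).mpr fun h => hij (hinj h)

lemma rd_sqf_prod {t : ℕ} (p : Fin t → ℕ) (hp : ∀ i, (p i).Prime) (hinj : Function.Injective p) :
    Squarefree (∏ j, p j) := by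
  apply Finset.squarefree_prod_of_pairwise_isCoprime
  · intro i _ j _ hij
    exact Nat.coprime_iff_isRelPrime.mp (rd_cop p hp hinj i j hij)
  · intro i _
    exact (hp i).prime.squarefree

lemma rd_prod_dvd {t : ℕ} (p : Fin t → ℕ) (X : Fin t → ZMod 2) :
    ∏ j, p j ^ (X j).val ∣ ∏ j, p j := by
  apply Finset.prod_dvd_prod_of_dvd
  intro j _
  have : (X j).val ≤ 1 := by have := ZMod.val_lt (X j); omega
  exact (pow_dvd_pow _ this).trans (by simp)

lemma rd_prod_dvd_D {t : ℕ} (p : Fin t → ℕ) (hp : ∀ i, (p i).Prime) (hinj : Function.Injective p)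
    (D : ℤ) (hdvd : ∀ i, (p i : ℤ) ∣ D) : ((∏ j, p j : ℕ) : ℤ) ∣ D := by
  rw [Nat.cast_prod]
  apply Finset.prod_dvd_of_coprime
  · intro i _ j _ hij
    exact Nat.isCoprime_iff_coprime.mpr (rd_cop p hp hinj i j hij)
  · intro i _
    exact hdvd i

lemma rd_inv {t : ℕ} (p : Fin t → ℕ) (hp : ∀ i, (p i).Prime) (hinj : Function.Injective p)
    (D : ℤ) (hall : ∀ q : ℕ, q.Prime → (q : ℤ) ∣ D → ∃ i, p i = q)
    (d : ℕ) (hd : Squarefree d) (hdD : (d : ℤ) ∣ D) :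
    ∏ i, p i ^ ((padicValNat (p i) d : ZMod 2)).val = d := by
  set X : Fin t → ZMod 2 := fun i => (padicValNat (p i) d : ZMod 2) with hX
  have hs : Squarefree (∏ i, p i ^ (X i).val) :=
    (rd_sqf_prod p hp hinj).squarefree_of_dvd (rd_prod_dvd p X)
  have key : ∀ i, p i ∣ ∏ i, p i ^ (X i).val ↔ p i ∣ d := by
    intro i
    have : Fact (p i).Prime := ⟨hp i⟩
    rw [dvd_iff_padicValNat_ne_zero hs.ne_zero, dvd_iff_padicValNat_ne_zero hd.ne_zero,
      rd_val_prod p hp hinj]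
    have h1 : padicValNat (p i) d ≤ 1 := by
      rw [← Nat.factorization_def _ (hp i)]
      exact hd.natFactorization_le_one _
    have h2 : padicValNat (p i) d = 0 ∨ padicValNat (p i) d = 1 := by omega
    simp only [hX]
    rcases h2 with h | h <;> rw [h]
    · simp
    · simp [ZMod.val_one]
  rw [Nat.Squarefree.ext_iff hs hd]
  intro q hq
  constructor
  · intro h
    obtain ⟨i, _, hi⟩ := (Prime.dvd_finsetProd_iff hq.prime _).mp h
    have := (Nat.prime_dvd_prime_iff_eq hq (hp i)).mp (hq.dvd_of_dvd_pow hi)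
    subst this
    exact (key i).mp h
  · intro h
    obtain ⟨i, rfl⟩ := hall q hq ((Int.natCast_dvd_natCast.mpr h).trans hdD)
    exact (key i).mpr h

lemma rd_odot (d₁ d₂ : ℕ) (h1 : Squarefree d₁) (h2 : Squarefree d₂) :
    Squarefree (dOdot d₁ d₂) ∧ dOdot d₁ d₂ * Nat.gcd d₁ d₂ ^ 2 = d₁ * d₂ ∧
      dOdot d₁ d₂ ∣ Nat.lcm d₁ d₂ := by
  obtain ⟨a, b, hab, ha, hb⟩ := Nat.exists_coprime d₁ d₂
  set g := Nat.gcd d₁ d₂ with hg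
  have g0 : 0 < g := Nat.gcd_pos_of_pos_left _ (Nat.pos_of_ne_zero h1.ne_zero)
  have e : dOdot d₁ d₂ = a * b := by
    unfold dOdot
    rw [← hg]
    apply Nat.div_eq_of_eq_mul_left (by positivity)
    rw [ha, hb]; ring
  have sa : Squarefree a := h1.squarefree_of_dvd (Dvd.intro _ ha.symm)
  have sb : Squarefree b := h2.squarefree_of_dvd (Dvd.intro _ hb.symm)
  rw [e]
  refine ⟨(Nat.squarefree_mul hab).mpr ⟨sa, sb⟩, by rw [ha, hb]; ring, ?_⟩
  apply Nat.Coprime.mul_dvd_of_dvd_of_dvd hab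
  · exact (Dvd.intro _ ha.symm).trans (Nat.dvd_lcm_left _ _)
  · exact (Dvd.intro _ hb.symm).trans (Nat.dvd_lcm_right _ _)

lemma rd_solve (m D : ℤ) (hm : Squarefree m) (hmneg : m < 0)
    (hcase : (m % 4 = 1 ∧ D = m) ∨ ((m % 4 = 2 ∨ m % 4 = 3) ∧ D = 4 * m))
    (d : ℕ) (hd : Squarefree d) (hdD : (d : ℤ) ∣ D) (l : ℕ) (hl : l.Prime) (hlD : (l : ℤ) ∣ D)
    (hl2 : (2 : ℤ) ∣ D → l = 2)
    (h : ∀ q : ℕ, q.Prime → q ≠ 2 → (q : ℤ) ∣ m → q ≠ l → rdLoc m d q) :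
    ∃ u v : ℚ, u ^ 2 - m * v ^ 2 = d := by
  obtain ⟨n, rfl⟩ : ∃ n : ℕ, m = -(n : ℤ) := ⟨m.natAbs, by omega⟩
  have hn : Squarefree n := by
    have := Int.squarefree_natAbs.mpr hm
    simpa using this
  have hn0 : 0 < n := Nat.pos_of_ne_zero hn.ne_zero
  have hd0 : 0 < d := Nat.pos_of_ne_zero hd.ne_zero
  have h' : ∀ q : ℕ, q.Prime → q ≠ 2 → q ∣ n → q ≠ l → rdLoc (-(n : ℤ)) d q := fun q h1 h2 h3 h4 =>
    h q h1 h2 ((Int.natCast_dvd_natCast.mpr h3).neg_right) h4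
  by_cases hdn : d ∣ n
  · obtain ⟨b, rfl⟩ := hdn
    have hb0 : 0 < b := Nat.pos_of_mul_pos_left hn0
    have := rd_suff d b 1 hn hd0 hb0 (Or.inl rfl) (by simp) (by simp) l hl ?_ ?_
    · simpa using this
    · rcases hcase with ⟨h4, rfl⟩ | ⟨h4, rfl⟩
      · right
        refine ⟨rfl, by omega, ?_⟩
        rw [dvd_neg] at hlD
        exact_mod_cast hlD
      · left; apply hl2; omega
    · intro q h1 h2 h3 h4
      rw [mul_one]; exact h' q h1 h2 h3 h4
  · rcases hcase with ⟨h4, rfl⟩ | ⟨h4, rfl⟩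
    · exfalso; apply hdn
      rw [dvd_neg] at hdD
      exact_mod_cast hdD
    have hd4 : d ∣ 4 * n := by
      rw [mul_neg, dvd_neg] at hdD
      exact_mod_cast hdD
    have hl2' : l = 2 := hl2 (by omega)
    have hde : 2 ∣ d := by
      by_contra ho
      apply hdn
      have : Nat.Coprime d 4 := by
        rw [show 4 = 2 ^ 2 by norm_num]
        apply Nat.Coprime.pow_right
        exact ((Nat.Prime.coprime_iff_not_dvd Nat.prime_two).mpr ho).symm
      exact this.dvd_of_dvd_mul_left hd4
    obtain ⟨g, rfl⟩ := hde
    have h2g : Nat.Coprime 2 g := Nat.coprime_of_squarefree_mul hd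
    have hgn : g ∣ n := by
      have : g ∣ 2 * n := by
        obtain ⟨k, hk⟩ := hd4
        exact ⟨k, by nlinarith⟩
      exact h2g.symm.dvd_of_dvd_mul_left this
    have h2n : Nat.Coprime 2 n := by
      rw [Nat.Prime.coprime_iff_not_dvd Nat.prime_two]
      intro h2
      exact hdn (h2g.mul_dvd_of_dvd_of_dvd h2 hgn)
    obtain ⟨b, rfl⟩ := hgn
    have hb0 : 0 < b := Nat.pos_of_mul_pos_left hn0
    have := rd_suff g b 2 hn (by omega) hb0 (Or.inr rfl) h2g h2n.coprime_mul_left_right l hl (Or.inl hl2') ?_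
    · rw [mul_comm 2 g]; exact this
    · intro q h1 h2 h3 h4
      rw [mul_comm g 2]; exact h' q h1 h2 h3 h4

/-- `d ↦ X_d = (v_{p₁}(d), …, v_{p_t}(d))` is a group isomorphism from
`D(K) ∩ N(K^×)` (with `⊙`) onto the kernel `{X : R·X = 0}` of the Rédei matrix, with inverse
`(x₁, …, x_t) ↦ Π p_i^{x_i}`. -/
theorem stmt_5 (K : Type) [Field K] [NumberField K]
    (hdeg : Module.finrank ℚ K = 2)
    (him : ∀ v : InfinitePlace K, v.IsComplex)
    (D : ℤ) (hD : D = discr K)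
    (t : ℕ) (p : Fin t → ℕ) (hp : ∀ i, (p i).Prime) (hinj : Function.Injective p)
    (hdvd : ∀ i, (p i : ℤ) ∣ D)
    (hall : ∀ q : ℕ, q.Prime → (q : ℤ) ∣ D → ∃ i, p i = q)
    (hord : ∀ i : Fin t, p i = 2 → (i : ℕ) = t - 1)
    (S : Set ℕ)
    (hS : S = {d : ℕ | 0 < d ∧ Squarefree d ∧ (d : ℤ) ∣ D ∧
      ∃ x : K, x ≠ 0 ∧ Algebra.norm ℚ x = (d : ℚ)})
    (φ : ℕ → Fin t → ZMod 2)
    (hφ : φ = fun d i => (padicValNat (p i) d : ZMod 2)) :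
    -- φ maps S into the kernel of R
    (∀ d ∈ S, (redeiMatrix D t p).mulVec (φ d) = 0) ∧
    -- φ is a homomorphism for ⊙ (and S is closed under ⊙)
    (∀ d₁ ∈ S, ∀ d₂ ∈ S, dOdot d₁ d₂ ∈ S ∧ φ (dOdot d₁ d₂) = φ d₁ + φ d₂) ∧
    -- φ is injective on S
    (∀ d₁ ∈ S, ∀ d₂ ∈ S, φ d₁ = φ d₂ → d₁ = d₂) ∧
    -- φ is surjective onto the kernel, with inverse X ↦ Π p_i^{x_i}
    (∀ X : Fin t → ZMod 2, (redeiMatrix D t p).mulVec X = 0 →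
      (∏ i, p i ^ (X i).val) ∈ S ∧ φ (∏ i, p i ^ (X i).val) = X) ∧
    -- the inverse formula recovers d
    (∀ d ∈ S, ∏ i, p i ^ (φ d i).val = d) := by
  obtain ⟨m, hm, hmneg, hcase, hnorm⟩ := rd_field K hdeg him
  rw [← hD] at hcase
  have hDm : D = m ∨ D = 4 * m := by
    rcases hcase with h | h
    · exact Or.inl h.2
    · exact Or.inr h.2
  have hmem : ∀ d : ℕ, d ∈ S ↔ Squarefree d ∧ (d : ℤ) ∣ D ∧ ∃ u v : ℚ, u ^ 2 - m * v ^ 2 = d := by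
    intro d
    rw [hS, Set.mem_ofPred_eq]
    constructor
    · rintro ⟨h0, h1, h2, h3⟩
      exact ⟨h1, h2, (hnorm d (by exact_mod_cast h0.ne')).mp h3⟩
    · rintro ⟨h1, h2, h3⟩
      exact ⟨Nat.pos_of_ne_zero h1.ne_zero, h1, h2,
        (hnorm d (by exact_mod_cast h1.ne_zero)).mpr h3⟩
  have hinv : ∀ d ∈ S, ∏ i, p i ^ (φ d i).val = d := by
    intro d hd
    obtain ⟨h1, h2, -⟩ := (hmem d).mp hd
    rw [hφ]
    exact rd_inv p hp hinj D hall d h1 h2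
  have hodd : ∀ i : Fin (t - 1), p (i.castLE (Nat.sub_le t 1)) ≠ 2 := by
    intro i h
    have := hord _ h
    have := i.2
    simp at *
    omega
  have hpm : ∀ i, p i ≠ 2 → (p i : ℤ) ∣ m := by
    intro i h2
    rcases hDm with h | h
    · rw [← h]; exact hdvd i
    · have hP : Prime (p i : ℤ) := Nat.prime_iff_prime_int.mp (hp i)
      have h3 := hdvd i
      rw [h] at h3
      refine (hP.dvd_or_dvd h3).resolve_left ?_
      intro h4
      have h5 : p i ∣ 2 ^ 2 := by exact_mod_cast h4
      exact h2 ((Nat.prime_dvd_prime_iff_eq (hp i) Nat.prime_two).mp ((hp i).dvd_of_dvd_pow h5))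
  refine ⟨?_, ?_, ?_, ?_, hinv⟩
  · intro d hd
    obtain ⟨h1, h2, u, v, huv⟩ := (hmem d).mp hd
    ext i
    rw [Pi.zero_apply, rd_row m D hm hDm t p hp hinj _ i (hodd i) (hpm _ (hodd i)), hinv d hd]
    exact rd_nec m hm d _ h1 (hp _) (hpm _ (hodd i)) u v huv
  · intro d₁ hd₁ d₂ hd₂
    have hs1 := ((hmem d₁).mp hd₁).1
    have hs2 := ((hmem d₂).mp hd₂).1
    obtain ⟨o1, o2, o3⟩ := rd_odot d₁ d₂ hs1 hs2
    have hg0 : Nat.gcd d₁ d₂ ≠ 0 := Nat.gcd_ne_zero_left hs1.ne_zero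
    constructor
    · rw [hS] at hd₁ hd₂ ⊢
      obtain ⟨-, -, hD1, x, hx, hxn⟩ := hd₁
      obtain ⟨-, -, hD2, y, hy, hyn⟩ := hd₂
      refine ⟨Nat.pos_of_ne_zero o1.ne_zero, o1, ?_, x * y * algebraMap ℚ K ((Nat.gcd d₁ d₂ : ℚ)⁻¹), ?_, ?_⟩
      · rw [Int.natCast_dvd] at hD1 hD2 ⊢
        exact o3.trans (Nat.lcm_dvd hD1 hD2)
      · refine mul_ne_zero (mul_ne_zero hx hy) ?_
        rw [map_inv₀, map_natCast]
        exact inv_ne_zero (by exact_mod_cast hg0)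
      · have hgq : (Nat.gcd d₁ d₂ : ℚ) ≠ 0 := by exact_mod_cast hg0
        rw [map_mul, map_mul, hxn, hyn, Algebra.norm_algebraMap, hdeg, inv_pow, ← div_eq_mul_inv,
          div_eq_iff (pow_ne_zero 2 hgq)]
        exact_mod_cast o2.symm
    · ext i
      have : Fact (p i).Prime := ⟨hp i⟩
      have h := congrArg (padicValNat (p i)) o2
      rw [padicValNat.mul o1.ne_zero (pow_ne_zero 2 hg0), padicValNat.mul hs1.ne_zero hs2.ne_zero,
        padicValNat.pow] at h
      have h2 := congrArg (Nat.cast : ℕ → ZMod 2) h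
      push_cast at h2
      have two : (2 : ZMod 2) = 0 := by decide
      rw [two, zero_mul, add_zero] at h2
      rw [hφ]
      exact h2
  · intro d₁ hd₁ d₂ hd₂ h
    rw [← hinv d₁ hd₁, ← hinv d₂ hd₂, h]
  · intro X hX
    constructor
    · rw [hmem]
      have hsd := rd_prod_dvd p X
      have hs := (rd_sqf_prod p hp hinj).squarefree_of_dvd hsd
      have hdD : ((∏ i, p i ^ (X i).val : ℕ) : ℤ) ∣ D :=
        (Int.natCast_dvd_natCast.mpr hsd).trans (rd_prod_dvd_D p hp hinj D hdvd)
      refine ⟨hs, hdD, ?_⟩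
      have ht : 0 < t := by
        have h1 : D.natAbs ≠ 1 := by omega
        obtain ⟨q, hq, hqd⟩ := Nat.exists_prime_and_dvd h1
        obtain ⟨i, -⟩ := hall q hq (Int.natCast_dvd.mpr hqd)
        exact i.pos
      set e : Fin t := ⟨t - 1, by omega⟩ with he
      refine rd_solve m D hm hmneg hcase _ hs hdD (p e) (hp e) (hdvd e) ?_ ?_
      · intro h2
        obtain ⟨i, hi⟩ := hall 2 Nat.prime_two (by exact_mod_cast h2)
        have : i = e := Fin.ext (hord i hi)
        rw [← this, hi]
      · intro q hq hq2 hqm hqe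
        have hqD : (q : ℤ) ∣ D := by
          rcases hDm with h | h
          · rw [h]; exact hqm
          · rw [h]; exact hqm.mul_left _
        obtain ⟨j, rfl⟩ := hall q hq hqD
        have hj : (j : ℕ) < t - 1 := by
          have h1 := j.2
          have h2 : (j : ℕ) ≠ t - 1 := fun h => hqe (congrArg p (Fin.ext h))
          omega
        have := (rd_row m D hm hDm t p hp hinj X ⟨j, hj⟩ (hodd _) (hpm _ (hodd _))).mp
          (by rw [hX]; rfl)
        exact this
    · ext i
      rw [hφ]
      simp only
      rw [rd_val_prod p hp hinj, ZMod.natCast_zmod_val]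
end
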